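/- arXiv:0912.5185 — 4 statements merged into one kernel-verified Lean document; each statement's English description precedes it below -/
import Mathlib

section
/- Let F be a field of characteristic zero and r a positive integer. For every invertible r×r matrix G over the field F((t)) of formal Laurent series, there exist an invertible matrix L over the power series ring F[[t]] (i.e. L ∈ GL_r(F[[t]])) and an invertible matrix H over the Laurent polynomial ring F[t,t⁻¹] (i.e. H ∈ GL_r(F[t,t⁻¹])) such that G = L·H, where L and H are regarded as matrices over F((t)) via the canonical embeddings. -/
/-!
Write `K = F((t))`, `O = F[[t]]`, `A = F[t,t⁻¹]`. Only three facts about these rings matter: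
`O` is a valuation ring of `K`, every nonzero `x : K` is a unit of `O` times a unit of `A`
(namely a power of `t`), and `K = A + O`. Under these hypotheses the factorization
`GL_n(K) = GL_n(O) · GL_n(A)` is a form of Hermite reduction, proved by induction on `n`
in `exists_factor_fin`.

After a row permutation the corner entry `α` of `G` divides its whole column over `O`, so
clearing the column is a lower unipotent operation over `O`. This leaves the block matrix
`[[α, v], [0, D]]`, where `D = L' H'` by induction. Write `α = ε τ` with `ε` a unit of `O` and
`τ` a unit of `A`, and split the row `ε⁻¹ v H'⁻¹ = p + u` with `p` over `A` and `u` over `O`. Then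
`[[α, v], [0, D]] = [[ε, ε u], [0, L']] * [[τ, p H'], [0, H']]`.
-/

/-- An element of the Laurent series field `F((t))` lies in the canonical image of the
power series ring `F[[t]]`. -/
def InPowerSeries (F : Type*) [Field F] (x : LaurentSeries F) : Prop :=
  x ∈ Set.range (HahnSeries.ofPowerSeries ℤ F)

/-- An element of the Laurent series field `F((t))` lies in the canonical image of the
Laurent polynomial ring `F[t,t⁻¹]`: it is of the form `t⁻ⁿ · q(t)` for a polynomial `q`. -/
def InLaurentPoly (F : Type*) [Field F] (x : LaurentSeries F) : Prop :=
  ∃ (n : ℕ) (q : Polynomial F),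
    x = HahnSeries.single (-n : ℤ) (1 : F) * HahnSeries.ofPowerSeries ℤ F (q : PowerSeries F)

open Matrix

/-- `M` is a matrix over the subring `S` of `K`, invertible with inverse over `S`; that is,
`M` lies in the image of `GL_n(S)` in the matrices over `K`. -/
def InGL {K n : Type*} [Field K] [Fintype n] [DecidableEq n] (S : Subring K)
    (M : Matrix n n K) : Prop :=
  ∃ N : Matrix n n K, M * N = 1 ∧ (∀ i j, M i j ∈ S) ∧ (∀ i j, N i j ∈ S)

section Abstract

variable {K : Type*} [Field K]

lemma mul_entry_mem {l m n : Type*} [Fintype m] (S : Subring K) {M : Matrix l m K}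
    {N : Matrix m n K} (hM : ∀ i j, M i j ∈ S) (hN : ∀ i j, N i j ∈ S) (i : l) (j : n) :
    (M * N) i j ∈ S := by
  rw [Matrix.mul_apply]
  exact S.sum_mem fun k _ => S.mul_mem (hM i k) (hN k j)

lemma one_entry_mem {n : Type*} [DecidableEq n] (S : Subring K) (i j : n) :
    (1 : Matrix n n K) i j ∈ S := by
  rw [Matrix.one_apply]
  split_ifs
  exacts [S.one_mem, S.zero_mem]

lemma InGL.mul {n : Type*} [Fintype n] [DecidableEq n] {S : Subring K} {M M' : Matrix n n K}
    (h : InGL S M) (h' : InGL S M') : InGL S (M * M') := by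
  obtain ⟨N, h1, h2, h3⟩ := h
  obtain ⟨N', h1', h2', h3'⟩ := h'
  refine ⟨N' * N, ?_, mul_entry_mem S h2 h2', mul_entry_mem S h3' h3⟩
  rw [Matrix.mul_assoc, ← Matrix.mul_assoc M', h1', Matrix.one_mul, h1]

lemma InGL.submatrix {m n : Type*} [Fintype n] [DecidableEq n] [Fintype m] [DecidableEq m]
    {S : Subring K} {M : Matrix n n K} (h : InGL S M) (e f : m ≃ n) :
    InGL S (M.submatrix e f) := by
  obtain ⟨N, h1, h2, h3⟩ := h
  refine ⟨N.submatrix f e, ?_, fun _ _ => h2 _ _, fun _ _ => h3 _ _⟩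
  rw [Matrix.submatrix_mul_equiv, h1, Matrix.submatrix_one_equiv]

lemma fromBlocks_entry_mem {m n : Type*} (S : Subring K) {a : Matrix m m K} {b : Matrix m n K}
    {c : Matrix n m K} {d : Matrix n n K} (ha : ∀ i j, a i j ∈ S) (hb : ∀ i j, b i j ∈ S)
    (hc : ∀ i j, c i j ∈ S) (hd : ∀ i j, d i j ∈ S) (i j) : fromBlocks a b c d i j ∈ S := by
  rcases i with i | i <;> rcases j with j | j
  exacts [ha i j, hb i j, hc i j, hd i j]

lemma InGL.upper {m n : Type*} [Fintype n] [DecidableEq n] [Fintype m] [DecidableEq m]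
    {S : Subring K} {a : Matrix m m K} {b : Matrix m n K} {d : Matrix n n K}
    (ha : InGL S a) (hb : ∀ i j, b i j ∈ S) (hd : InGL S d) :
    InGL S (fromBlocks a b 0 d) := by
  obtain ⟨a', h1, h2, h3⟩ := ha
  obtain ⟨d', k1, k2, k3⟩ := hd
  refine ⟨fromBlocks a' (-(a' * b * d')) 0 d', ?_, ?_, ?_⟩
  · rw [fromBlocks_multiply]
    simp [h1, k1, ← Matrix.mul_assoc, fromBlocks_one]
  · exact fromBlocks_entry_mem S h2 hb (fun _ _ => S.zero_mem) k2
  · exact fromBlocks_entry_mem S h3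
      (fun i j => S.neg_mem (mul_entry_mem S (mul_entry_mem S h3 hb) k3 i j))
      (fun _ _ => S.zero_mem) k3

lemma InGL.lower {m n : Type*} [Fintype n] [DecidableEq n] [Fintype m] [DecidableEq m]
    {S : Subring K} {c : Matrix n m K} (hc : ∀ i j, c i j ∈ S) :
    InGL S (fromBlocks 1 0 c 1 : Matrix (m ⊕ n) (m ⊕ n) K) := by
  refine ⟨fromBlocks 1 0 (-c) 1, ?_, ?_, ?_⟩
  · rw [fromBlocks_multiply]
    simp [fromBlocks_one]
  · exact fromBlocks_entry_mem S (one_entry_mem S) (fun _ _ => S.zero_mem) hc (one_entry_mem S)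
  · exact fromBlocks_entry_mem S (one_entry_mem S) (fun _ _ => S.zero_mem)
      (fun i j => S.neg_mem (hc i j)) (one_entry_mem S)

lemma InGL.scalar {S : Subring K} {x : K} (hx0 : x ≠ 0) (hx : x ∈ S) (hx' : x⁻¹ ∈ S) :
    InGL S (of fun (_ _ : Unit) => x) := by
  refine ⟨of fun _ _ => x⁻¹, ?_, fun _ _ => hx, fun _ _ => hx'⟩
  ext i j
  simp [Matrix.mul_apply, hx0]

/-- The inductive step: a matrix whose corner entry divides its column over `O` factors as soon
as its Schur complement does. -/
lemma exists_factor_block {n : Type*} [Fintype n] [DecidableEq n] {O A : Subring K}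
    (hsum : ∀ x : K, ∃ a ∈ A, ∃ o ∈ O, x = a + o)
    (hfac : ∀ x : K, x ≠ 0 → ∃ e f : K, e ∈ O ∧ e⁻¹ ∈ O ∧ f ∈ A ∧ f⁻¹ ∈ A ∧ x = e * f)
    (ih : ∀ G : Matrix n n K, G.det ≠ 0 → ∃ L H, InGL O L ∧ InGL A H ∧ G = L * H)
    (G : Matrix (Unit ⊕ n) (Unit ⊕ n) K) (hG : G.det ≠ 0)
    (h0 : G (.inl ()) (.inl ()) ≠ 0)
    (hdiv : ∀ i, G (.inr i) (.inl ()) / G (.inl ()) (.inl ()) ∈ O) :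
    ∃ L H, InGL O L ∧ InGL A H ∧ G = L * H := by
  obtain ⟨e, f, he, he', hf, hf', hef⟩ := hfac _ h0
  set α := G (.inl ()) (.inl ()) with hα
  have he0 : e ≠ 0 := by rintro rfl; simp_all
  have hf0 : f ≠ 0 := by rintro rfl; simp_all
  let c : Matrix n Unit K := of fun i _ => G (.inr i) (.inl ()) / α
  let v : Matrix Unit n K := G.toBlocks₁₂
  let a : Matrix Unit Unit K := of fun _ _ => α
  let D : Matrix n n K := G.toBlocks₂₂ - c * v
  have hca : c * a = G.toBlocks₂₁ := by
    ext i j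
    simp [c, a, Matrix.mul_apply, toBlocks₂₁, h0]
  have hGeq : G = fromBlocks 1 0 c 1 * fromBlocks a v 0 D := by
    rw [fromBlocks_multiply]
    conv_lhs => rw [← fromBlocks_toBlocks G]
    simp only [hca, D, v, Matrix.one_mul, Matrix.zero_mul, Matrix.mul_zero, add_zero,
      add_sub_cancel]
    congr 1
  have hD : D.det ≠ 0 := by
    intro h
    apply hG
    rw [hGeq, Matrix.det_mul, det_fromBlocks_zero₂₁, h]
    simp
  obtain ⟨L', H', hL', hH', hLH⟩ := ih D hD
  obtain ⟨N, hN, hH'A, hNA⟩ := id hH'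
  have hN' : N * H' = 1 := mul_eq_one_comm.mp hN
  choose p hp u hu hpu using fun j => hsum ((e⁻¹ • (v * N)) () j)
  let P : Matrix Unit n K := of fun _ j => p j
  let U : Matrix Unit n K := of fun _ j => u j
  have hPU : e⁻¹ • (v * N) = P + U := by
    ext i j
    exact hpu j
  have hv : v = e • ((P + U) * H') := by
    rw [← hPU, Matrix.smul_mul, Matrix.mul_assoc, hN', Matrix.mul_one, smul_smul,
      mul_inv_cancel₀ he0, one_smul]
  refine ⟨fromBlocks 1 0 c 1 * fromBlocks (of fun _ _ => e) (e • U) 0 L',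
    fromBlocks (of fun _ _ => f) (P * H') 0 H', ?_, ?_, ?_⟩
  · refine (InGL.lower fun i _ => hdiv i).mul (InGL.upper (InGL.scalar he0 he he') ?_ hL')
    exact fun _ j => O.mul_mem he (hu j)
  · exact InGL.upper (InGL.scalar hf0 hf hf') (mul_entry_mem A (fun _ j => hp j) hH'A) hH'
  · conv_lhs => rw [hGeq]
    rw [Matrix.mul_assoc]
    congr 1
    rw [fromBlocks_multiply]
    have hsc : ∀ M : Matrix Unit n K, (of fun (_ _ : Unit) => e) * M = e • M := by
      intro M
      ext i j
      simp [Matrix.mul_apply]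
    have h1 : a = (of fun (_ _ : Unit) => e) * (of fun (_ _ : Unit) => f) := by
      ext i j
      simp [Matrix.mul_apply, a, hef]
    rw [hsc, ← h1, ← hLH]
    conv_lhs => rw [hv]
    simp [Matrix.add_mul]

/-- `GL_n(K) = GL_n(O) · GL_n(A)` when `O` is a valuation ring of `K`, `K = A + O`, and
`Kˣ = Oˣ · Aˣ`. -/
lemma exists_factor_fin (O : ValuationSubring K) (A : Subring K)
    (hsum : ∀ x : K, ∃ a ∈ A, ∃ o ∈ O.toSubring, x = a + o)
    (hfac : ∀ x : K, x ≠ 0 → ∃ e f : K, e ∈ O.toSubring ∧ e⁻¹ ∈ O.toSubring ∧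
      f ∈ A ∧ f⁻¹ ∈ A ∧ x = e * f) (n : ℕ) :
    ∀ G : Matrix (Fin n) (Fin n) K, G.det ≠ 0 →
      ∃ L H, InGL O.toSubring L ∧ InGL A H ∧ G = L * H := by
  induction n with
  | zero =>
    exact fun G _ => ⟨1, 1, ⟨1, by simp, nofun, nofun⟩, ⟨1, by simp, nofun, nofun⟩,
      Subsingleton.elim _ _⟩
  | succ n ih =>
    intro G hG
    obtain ⟨k, hk⟩ := Finite.exists_max fun i => O.valuation (G i 0)
    have hk0 : G k 0 ≠ 0 := by
      intro h
      refine hG (Matrix.det_eq_zero_of_column_eq_zero 0 fun i => ?_)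
      have := hk i
      simpa [h] using this
    have hdiv : ∀ i, G i 0 / G k 0 ∈ O := by
      intro i
      rw [← O.valuation_le_one_iff, map_div₀]
      exact div_le_one_of_le₀ (hk i) zero_le
    -- `f` sends the distinguished index to `0`; `e` also moves the pivot row `k` there.
    let f : Unit ⊕ Fin n ≃ Fin (n + 1) :=
      (Equiv.sumComm _ _).trans ((Equiv.optionEquivSumPUnit _).symm.trans (finSuccEquiv n).symm)
    have hf : f (.inl ()) = 0 := by simp [f]
    let e := f.trans (Equiv.swap 0 k)
    have he : e (.inl ()) = k := by simp [e, hf]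
    obtain ⟨L, H, hL, hH, hLH⟩ := exists_factor_block hsum hfac ih (G.submatrix e f)
      (by
        intro h
        apply hG
        have h2 : G.submatrix e f =
            ((G.submatrix (Equiv.swap 0 k) id).submatrix f f) := rfl
        rw [h2, Matrix.det_submatrix_equiv_self, Matrix.det_permute] at h
        refine (mul_eq_zero.mp h).resolve_left ?_
        rcases Int.units_eq_one_or (Equiv.Perm.sign (Equiv.swap 0 k)) with h' | h' <;> simp [h'])
      (by simpa [hf, he] using hk0)
      (fun i => by simpa [hf, he] using hdiv (e (.inr i)))
    refine ⟨L.submatrix e.symm f.symm, H.submatrix f.symm f.symm, hL.submatrix _ _,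
      hH.submatrix _ _, ?_⟩
    rw [Matrix.submatrix_mul_equiv, ← hLH]
    ext i j
    simp

end Abstract

section Laurent

variable (F : Type*) [Field F]

lemma single_mul_single_neg (d : ℤ) :
    (HahnSeries.single d (1 : F)) * HahnSeries.single (-d) (1 : F) = 1 := by
  rw [HahnSeries.single_mul_single]
  simp

lemma inPowerSeries_single (n : ℕ) : InPowerSeries F (HahnSeries.single (n : ℤ) (1 : F)) :=
  ⟨PowerSeries.X ^ n, HahnSeries.ofPowerSeries_X_pow n⟩

lemma inLaurentPoly_single (d : ℤ) : InLaurentPoly F (HahnSeries.single d (1 : F)) := by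
  refine ⟨d.natAbs, Polynomial.X ^ (d + d.natAbs).toNat, ?_⟩
  rw [Polynomial.coe_pow, Polynomial.coe_X, HahnSeries.ofPowerSeries_X_pow,
    HahnSeries.single_mul_single, one_mul]
  have h : d = -(d.natAbs : ℤ) + ((d + d.natAbs).toNat : ℤ) := by omega
  rw [← h]

/-- A nonzero Laurent series is a unit of `F[[t]]` times a power of `t`. -/
lemma exists_unit_mul_single (x : LaurentSeries F) (hx : x ≠ 0) :
    ∃ (e : LaurentSeries F) (d : ℤ), InPowerSeries F e ∧ InPowerSeries F e⁻¹ ∧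
      x = e * HahnSeries.single d 1 := by
  have hc : PowerSeries.constantCoeff x.powerSeriesPart ≠ 0 := by
    rw [← PowerSeries.coeff_zero_eq_constantCoeff_apply, LaurentSeries.powerSeriesPart_coeff]
    simpa [HahnSeries.coeff_order_eq_zero] using hx
  refine ⟨HahnSeries.ofPowerSeries ℤ F x.powerSeriesPart, x.order, ⟨_, rfl⟩,
    ⟨(x.powerSeriesPart)⁻¹, ?_⟩, ?_⟩
  · apply eq_inv_of_mul_eq_one_left
    rw [← map_mul, PowerSeries.inv_mul_cancel _ hc, map_one]
  · rw [mul_comm, LaurentSeries.single_order_mul_powerSeriesPart]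

/-- `F[[t]]` as a valuation subring of `F((t))`. -/
noncomputable def powerSeriesValuationSubring : ValuationSubring (LaurentSeries F) where
  toSubring := (HahnSeries.ofPowerSeries ℤ F).range
  mem_or_inv_mem' x := by
    rcases eq_or_ne x 0 with rfl | hx
    · exact .inl (Subring.zero_mem _)
    obtain ⟨e, d, he, he', rfl⟩ := exists_unit_mul_single F x hx
    obtain ⟨n, rfl | rfl⟩ := d.eq_nat_or_neg
    · exact .inl (Subring.mul_mem (HahnSeries.ofPowerSeries ℤ F).range he
        (inPowerSeries_single F n))
    · right
      have : (HahnSeries.single (-n : ℤ) (1 : F))⁻¹ = HahnSeries.single (n : ℤ) 1 :=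
        inv_eq_of_mul_eq_one_left (single_mul_single_neg F n)
      rw [mul_inv, this]
      exact Subring.mul_mem (HahnSeries.ofPowerSeries ℤ F).range he' (inPowerSeries_single F n)

variable {F} in
lemma InLaurentPoly.mul {x y : LaurentSeries F} (hx : InLaurentPoly F x)
    (hy : InLaurentPoly F y) : InLaurentPoly F (x * y) := by
  obtain ⟨n, q, rfl⟩ := hx
  obtain ⟨m, p, rfl⟩ := hy
  refine ⟨n + m, q * p, ?_⟩
  rw [Polynomial.coe_mul, map_mul, mul_mul_mul_comm, HahnSeries.single_mul_single, mul_one]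
  congr 3
  push_cast
  ring

variable {F} in
lemma InLaurentPoly.add {x y : LaurentSeries F} (hx : InLaurentPoly F x)
    (hy : InLaurentPoly F y) : InLaurentPoly F (x + y) := by
  obtain ⟨n, q, rfl⟩ := hx
  obtain ⟨m, p, rfl⟩ := hy
  refine ⟨n + m, Polynomial.X ^ m * q + Polynomial.X ^ n * p, ?_⟩
  rw [Polynomial.coe_add, Polynomial.coe_mul, Polynomial.coe_mul, Polynomial.coe_pow,
    Polynomial.coe_pow, Polynomial.coe_X, map_add, map_mul, map_mul,
    HahnSeries.ofPowerSeries_X_pow, HahnSeries.ofPowerSeries_X_pow, mul_add, ← mul_assoc,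
    ← mul_assoc, HahnSeries.single_mul_single, HahnSeries.single_mul_single, mul_one]
  congr 4 <;> push_cast <;> ring

/-- `F[t,t⁻¹]` as a subring of `F((t))`. -/
def laurentPolySubring : Subring (LaurentSeries F) where
  carrier := {x | InLaurentPoly F x}
  mul_mem' := InLaurentPoly.mul
  add_mem' := InLaurentPoly.add
  one_mem' := ⟨0, 1, by simp⟩
  zero_mem' := ⟨0, 0, by simp⟩
  neg_mem' := by
    rintro _ ⟨n, q, rfl⟩
    exact ⟨n, -q, by simp⟩

/-- Truncation splits a Laurent series as a Laurent polynomial plus a power series. -/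
lemma exists_laurentPoly_add_powerSeries (x : LaurentSeries F) :
    ∃ a, InLaurentPoly F a ∧ ∃ o, InPowerSeries F o ∧ x = a + o := by
  rcases eq_or_ne x 0 with rfl | hx
  · exact ⟨0, ⟨0, 0, by simp⟩, 0, ⟨0, by simp⟩, by simp⟩
  obtain ⟨e, d, ⟨f, rfl⟩, -, rfl⟩ := exists_unit_mul_single F x hx
  obtain ⟨n, rfl | rfl⟩ := d.eq_nat_or_neg
  · exact ⟨0, ⟨0, 0, by simp⟩, _, Subring.mul_mem (HahnSeries.ofPowerSeries ℤ F).range ⟨f, rfl⟩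
      (inPowerSeries_single F n), by simp⟩
  · refine ⟨_, ⟨n, f.trunc n, rfl⟩, _, ⟨PowerSeries.mk fun i => PowerSeries.coeff (i + n) f, rfl⟩,
      ?_⟩
    conv_lhs => rw [f.eq_X_pow_mul_shift_add_trunc n]
    rw [map_add, map_mul, HahnSeries.ofPowerSeries_X_pow, add_mul, mul_right_comm,
      single_mul_single_neg, one_mul, add_comm, mul_comm]

end Laurent

/-- Every `G ∈ GL_r(F((t)))` factors as `G = L·H` with `L ∈ GL_r(F[[t]])` and
`H ∈ GL_r(F[t,t⁻¹])`. -/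
theorem laurent_series_matrix_factorization
    (F : Type*) [Field F] [CharZero F] (r : ℕ) (hr : 0 < r)
    (G Ginv : Matrix (Fin r) (Fin r) (LaurentSeries F))
    (hG₁ : G * Ginv = 1) (hG₂ : Ginv * G = 1) :
    ∃ L Linv H Hinv : Matrix (Fin r) (Fin r) (LaurentSeries F),
      L * Linv = 1 ∧ Linv * L = 1 ∧
      H * Hinv = 1 ∧ Hinv * H = 1 ∧
      (∀ i j, InPowerSeries F (L i j)) ∧ (∀ i j, InPowerSeries F (Linv i j)) ∧
      (∀ i j, InLaurentPoly F (H i j)) ∧ (∀ i j, InLaurentPoly F (Hinv i j)) ∧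
      G = L * H := by
  have hdet : G.det ≠ 0 := by
    intro h
    have := congrArg Matrix.det hG₁
    simp [h] at this
  obtain ⟨L, H, ⟨Li, hL1, hL2, hL3⟩, ⟨Hi, hH1, hH2, hH3⟩, hLH⟩ :=
    exists_factor_fin (powerSeriesValuationSubring F) (laurentPolySubring F)
      (exists_laurentPoly_add_powerSeries F)
      (by
        intro x hx
        obtain ⟨e, d, he, he', hx⟩ := exists_unit_mul_single F x hx
        refine ⟨e, _, he, he', inLaurentPoly_single F d, ?_, hx⟩
        rw [inv_eq_of_mul_eq_one_right (single_mul_single_neg F d)]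
        exact inLaurentPoly_single F (-d))
      r G hdet
  exact ⟨L, Li, H, Hi, hL1, mul_eq_one_comm.mp hL1, hH1, mul_eq_one_comm.mp hH1,
    hL2, hL3, hH2, hH3, hLH⟩
end

section
/- Let F be a field of characteristic zero and r a positive integer. Let O ⊂ F(t) be the local subring of the rational function field F(t) consisting of rational functions with no pole at t = 0 (the localization of the polynomial ring F[t] at the maximal ideal generated by t). Then every invertible r×r matrix G over F(t) factors as G = L·H, where L ∈ GL_r(O) and H ∈ GL_r(F[t,t⁻¹]), all matrices being regarded inside GL_r(F(t)) via the canonical embeddings. -/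
/-!
Clearing denominators, `G = P / (tⁿ q)` with `P` a polynomial matrix of nonzero determinant and
`q(0) ≠ 0`. Since `q` is a unit of `O` and `tⁿ` is a unit of `F[t,t⁻¹]`, it suffices to factor `P`.

If `det P` does not vanish at `0` then `P` is already in `GL_r(O)`. Otherwise `P(0)` kills a
nonzero constant vector `v`; after the invertible constant column operation that replaces some
column `j` with `v j ≠ 0` by `P v`, this column is divisible by `t`, and `t` can be extracted
into the right-hand factor. This lowers the degree of `det P` by one, so the procedure stops
(`exists_poly_factorization`), giving `P = P' K` over `F[t]` with `det P'(0) ≠ 0` and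
`det K = c tᵐ`, `c ≠ 0`. Then `P' / q` and `K / tⁿ` are the required factors, their inverses
being given by adjugates.
-/

/-- A rational function in `F(t)` is regular at `t = 0`, i.e. lies in the localization of
`F[t]` at the maximal ideal `(t)`: it can be written `a/b` with `b(0) ≠ 0`. -/
def RegularAtZero (F : Type*) [Field F] (x : RatFunc F) : Prop :=
  ∃ a b : Polynomial F, Polynomial.eval 0 b ≠ 0 ∧
    x = algebraMap (Polynomial F) (RatFunc F) a / algebraMap (Polynomial F) (RatFunc F) b

/-- A rational function in `F(t)` lies in the canonical image of the Laurent polynomial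
ring `F[t,t⁻¹]`: it is of the form `a/tⁿ` for a polynomial `a`. -/
def InLaurentPolyRatFunc (F : Type*) [Field F] (x : RatFunc F) : Prop :=
  ∃ (n : ℕ) (a : Polynomial F),
    x = algebraMap (Polynomial F) (RatFunc F) a /
      (algebraMap (Polynomial F) (RatFunc F) Polynomial.X) ^ n

open Polynomial in
/-- One extraction step: if `det P` vanishes at `0`, a factor of determinant `c * X` splits off
on the right. -/
lemma exists_step {F : Type*} [Field F] {r : ℕ} (P : Matrix (Fin r) (Fin r) F[X])
    (h0 : P.det.eval 0 = 0) :
    ∃ (P' K : Matrix (Fin r) (Fin r) F[X]) (c : F), c ≠ 0 ∧ P = P' * K ∧ K.det = C c * X := by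
  have hdet : (P.map (eval 0)).det = 0 := by
    have := RingHom.map_det (evalRingHom (0 : F)) P
    rw [coe_evalRingHom, h0] at this
    exact this.symm
  obtain ⟨v, hv, hPv⟩ := Matrix.exists_mulVec_eq_zero_iff.2 hdet
  obtain ⟨j, hj⟩ := Function.ne_iff.1 hv
  have hj' : v j ≠ 0 := hj
  have hdvd : ∀ i, X ∣ P.mulVec (fun k => C (v k)) i := by
    intro i
    rw [X_dvd_iff, coeff_zero_eq_eval_zero]
    have := congrFun hPv i
    simpa [Matrix.mulVec, dotProduct, eval_finsetSum] using this
  choose w hw using hdvd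
  -- Right multiplication by `E` replaces column `j` of a matrix by the combination of its columns
  -- with coefficients `v`; right multiplication by `D` multiplies column `j` by `X`.
  let E : Matrix (Fin r) (Fin r) F[X] := Matrix.updateCol 1 j (fun k => C (v k))
  let D : Matrix (Fin r) (Fin r) F[X] := Matrix.updateCol 1 j (Pi.single j X)
  have hone : ∀ u : Fin r → F[X],
      (Matrix.updateCol (1 : Matrix (Fin r) (Fin r) F[X]) j u).det = u j := by
    intro u
    rw [← Matrix.cramer_apply, Matrix.cramer_one]
    rfl
  have hmul : ∀ (A : Matrix (Fin r) (Fin r) F[X]) (u : Fin r → F[X]),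
      A * Matrix.updateCol 1 j u = Matrix.updateCol A j (A.mulVec u) := by
    intro A u
    ext1 i k
    by_cases hk : k = j
    · subst hk
      simp [Matrix.mul_apply, Matrix.mulVec, dotProduct]
    · simp [Matrix.mul_apply, Matrix.updateCol_ne hk, Matrix.one_apply]
  have hE : E.det = C (v j) := hone _
  have hD : D.det = X := by simpa using hone (Pi.single j X)
  have key : P * E = Matrix.updateCol P j w * D := by
    rw [hmul, hmul]
    ext1 i k
    by_cases hk : k = j
    · subst hk
      simp [hw, mul_comm]
    · simp [Matrix.updateCol_ne hk]
  have hEinv : E * (C (v j)⁻¹ • E.adjugate) = 1 := by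
    rw [Matrix.mul_smul, Matrix.mul_adjugate, hE, smul_smul, ← C_mul, inv_mul_cancel₀ hj']
    simp
  refine ⟨Matrix.updateCol P j w, D * (C (v j)⁻¹ • E.adjugate), (v j)⁻¹, inv_ne_zero hj', ?_, ?_⟩
  · rw [← mul_assoc, ← key, mul_assoc, hEinv, mul_one]
  · have h1 : C (v j) * (C (v j)⁻¹ • E.adjugate).det = 1 := by
      rw [← hE, ← Matrix.det_mul, hEinv, Matrix.det_one]
    have h2 : (C (v j)⁻¹ • E.adjugate).det = C (v j)⁻¹ := by
      calc _ = C (v j)⁻¹ * (C (v j) * (C (v j)⁻¹ • E.adjugate).det) := by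
            rw [← mul_assoc, ← C_mul, inv_mul_cancel₀ hj', C_1, one_mul]
        _ = _ := by rw [h1, mul_one]
    rw [Matrix.det_mul, h2, hD, mul_comm]

open Polynomial in
/-- A polynomial matrix of nonzero determinant is `P' * K` with `P'` invertible over `O` and `K`
invertible over the Laurent polynomials. Induction on the degree of the determinant. -/
lemma exists_poly_factorization {F : Type*} [Field F] {r : ℕ} (d : ℕ) :
    ∀ P : Matrix (Fin r) (Fin r) F[X], P.det ≠ 0 → P.det.natDegree = d →
    ∃ (P' K : Matrix (Fin r) (Fin r) F[X]) (c : F) (m : ℕ),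
      c ≠ 0 ∧ P = P' * K ∧ P'.det.eval 0 ≠ 0 ∧ K.det = C c * X ^ m := by
  induction d with
  | zero =>
    intro P hP hd
    refine ⟨P, 1, 1, 0, one_ne_zero, by simp, ?_, by simp⟩
    rw [natDegree_eq_zero] at hd
    obtain ⟨a, ha⟩ := hd
    rw [← ha] at hP ⊢
    simpa using hP
  | succ d ih =>
    intro P hP hd
    by_cases h0 : P.det.eval 0 = 0
    · obtain ⟨P₁, K₁, c₁, hc₁, hPK, hK₁⟩ := exists_step P h0
      have hdet : P.det = P₁.det * (C c₁ * X) := by rw [hPK, Matrix.det_mul, hK₁]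
      have hP₁ : P₁.det ≠ 0 := by
        rintro h
        simp [hdet, h] at hP
      have hdeg : P₁.det.natDegree = d := by
        rw [hdet, natDegree_mul hP₁ (by simpa using hc₁), natDegree_C_mul_X _ hc₁] at hd
        omega
      obtain ⟨P', K, c, m, hc, hP', hev, hK⟩ := ih P₁ hP₁ hdeg
      refine ⟨P', K * K₁, c * c₁, m + 1, mul_ne_zero hc hc₁, ?_, hev, ?_⟩
      · rw [hPK, hP', mul_assoc]
      · rw [Matrix.det_mul, hK, hK₁, C_mul]
        ring
    · exact ⟨P, 1, 1, 0, one_ne_zero, by simp, h0, by simp⟩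

open Polynomial in
lemma exists_X_pow_mul {F : Type*} [Field F] (d : F[X]) (hd : d ≠ 0) :
    ∃ (n : ℕ) (q : F[X]), d = X ^ n * q ∧ q.eval 0 ≠ 0 := by
  obtain ⟨q, hq, hndvd⟩ := exists_eq_pow_rootMultiplicity_mul_and_not_dvd d hd 0
  refine ⟨_, q, by simpa using hq, ?_⟩
  rwa [dvd_iff_isRoot] at hndvd

/-- Explicit inverse over the fraction field of a scaled polynomial matrix `M / s`. -/
lemma scaled_inverse {F : Type*} [Field F] {r : ℕ} (M : Matrix (Fin r) (Fin r) (Polynomial F))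
    (hM : M.det ≠ 0) (s : RatFunc F) (hs : s ≠ 0) :
    let φ := algebraMap (Polynomial F) (RatFunc F)
    (s⁻¹ • M.map φ) * ((s / φ M.det) • M.adjugate.map φ) = 1 ∧
      ((s / φ M.det) • M.adjugate.map φ) * (s⁻¹ • M.map φ) = 1 := by
  intro φ
  have hφ : φ M.det ≠ 0 := RatFunc.algebraMap_ne_zero hM
  have h : (s⁻¹ • M.map φ) * ((s / φ M.det) • M.adjugate.map φ) = 1 := by
    rw [Matrix.smul_mul, Matrix.mul_smul, ← Matrix.map_mul, Matrix.mul_adjugate, smul_smul]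
    ext1 i j
    by_cases hij : i = j
    · subst hij
      simp
      field_simp
    · simp [Matrix.one_apply_ne hij]
  exact ⟨h, mul_eq_one_comm.1 h⟩

/-- Every `G ∈ GL_r(F(t))` factors as `G = L·H` with `L ∈ GL_r(O)`, where `O ⊂ F(t)` is
the local ring of rational functions with no pole at `t = 0`, and `H ∈ GL_r(F[t,t⁻¹])`. -/
theorem ratfunc_matrix_factorization
    (F : Type*) [Field F] [CharZero F] (r : ℕ) (hr : 0 < r)
    (G Ginv : Matrix (Fin r) (Fin r) (RatFunc F))
    (hG₁ : G * Ginv = 1) (hG₂ : Ginv * G = 1) :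
    ∃ L Linv H Hinv : Matrix (Fin r) (Fin r) (RatFunc F),
      L * Linv = 1 ∧ Linv * L = 1 ∧
      H * Hinv = 1 ∧ Hinv * H = 1 ∧
      (∀ i j, RegularAtZero F (L i j)) ∧ (∀ i j, RegularAtZero F (Linv i j)) ∧
      (∀ i j, InLaurentPolyRatFunc F (H i j)) ∧ (∀ i j, InLaurentPolyRatFunc F (Hinv i j)) ∧
      G = L * H := by
  classical
  set φ := algebraMap (Polynomial F) (RatFunc F) with hφ
  have hφ0 : ∀ {p : Polynomial F}, p ≠ 0 → φ p ≠ 0 := fun h => RatFunc.algebraMap_ne_zero h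
  -- A common denominator `d` of the entries of `G`.
  obtain ⟨⟨d, hd⟩, hint⟩ := IsLocalization.exist_integer_multiples_of_finite
    (nonZeroDivisors (Polynomial F)) (fun ij : Fin r × Fin r => G ij.1 ij.2)
  have hd0 : d ≠ 0 := nonZeroDivisors.ne_zero hd
  choose p hp using hint
  let P : Matrix (Fin r) (Fin r) (Polynomial F) := fun i j => p (i, j)
  have hPG : P.map φ = φ d • G := by
    ext1 i j
    have := hp (i, j)
    rw [Algebra.smul_def] at this
    exact this
  have hPdet : P.det ≠ 0 := by
    intro h
    have h1 : (P.map φ).det = 0 := by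
      have := RingHom.map_det φ P
      rw [h, map_zero] at this
      exact this.symm
    have h2 : G.det * Ginv.det = 1 := by rw [← Matrix.det_mul, hG₁, Matrix.det_one]
    rw [hPG, Matrix.det_smul] at h1
    rcases mul_eq_zero.1 h1 with h3 | h3
    · exact pow_ne_zero _ (hφ0 hd0) h3
    · simp [h3] at h2
  obtain ⟨n, q, hdq, hq⟩ := exists_X_pow_mul d hd0
  obtain ⟨P', K, c, m, hc, hPK, hev, hK⟩ := exists_poly_factorization _ P hPdet rfl
  have hq0 : q ≠ 0 := by rintro rfl; simp at hq
  have hP'0 : P'.det ≠ 0 := by intro h; simp [h] at hev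
  have hX : φ Polynomial.X ≠ 0 := hφ0 Polynomial.X_ne_zero
  have hC : φ (Polynomial.C c) ≠ 0 := hφ0 (by simpa using hc)
  have hCinv : φ (Polynomial.C c⁻¹) * φ (Polynomial.C c) = 1 := by
    rw [← map_mul, ← Polynomial.C_mul, inv_mul_cancel₀ hc]
    simp
  have hK0 : K.det ≠ 0 := by rw [hK]; simp [hc]
  obtain ⟨hL₁, hL₂⟩ := scaled_inverse P' hP'0 (φ q) (hφ0 hq0)
  obtain ⟨hH₁, hH₂⟩ := scaled_inverse K hK0 (φ Polynomial.X ^ n) (pow_ne_zero _ hX)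
  refine ⟨_, _, _, _, hL₁, hL₂, hH₁, hH₂, ?_, ?_, ?_, ?_, ?_⟩
  · intro i j
    exact ⟨P' i j, q, hq, by simp [div_eq_inv_mul, ← hφ]⟩
  · intro i j
    refine ⟨q * P'.adjugate i j, P'.det, hev, ?_⟩
    simp
    ring
  · intro i j
    exact ⟨n, K i j, by simp [div_eq_inv_mul, ← hφ]⟩
  · intro i j
    refine ⟨m, Polynomial.X ^ n * Polynomial.C c⁻¹ * K.adjugate i j, ?_⟩
    simp only [hK, Matrix.smul_apply, Matrix.map_apply, smul_eq_mul, map_mul, map_pow, ← hφ]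
    rw [eq_inv_of_mul_eq_one_left hCinv]
    field_simp
  · rw [Matrix.smul_mul, Matrix.mul_smul, ← Matrix.map_mul, ← hPK, hPG, smul_smul, smul_smul,
      hdq, map_mul, map_pow]
    have : (φ q)⁻¹ * ((φ Polynomial.X ^ n)⁻¹) * (φ Polynomial.X ^ n * φ q) = 1 := by
      have := hφ0 hq0
      field_simp
    rw [← mul_assoc] at this
    rw [← mul_assoc, this, one_smul]
end

section
/- Let p be a prime and r a positive integer; adopt exactly the hypotheses of the previous statement on the matrices (Nᵢ)_{i∈ℤ} and (Fᵢ)_{i∈ℤ} over ℚ_p (Nᵢ = 0 for i < −1, N₋₁ nilpotent, convergence of t·N on the open unit disk, convergence of F on an open annulus of outer radius 1, and the coefficientwise differential equation (m+1)·F_{m+1} + Σ_{j ≥ −1} Nⱼ·F_{m−j} = p·Σ_{k ≥ −1} F_{m−p+1−pk}·Nₖ for all m ∈ ℤ). Suppose further that (Gᵢ)_{i∈ℤ} are r×r matrices over ℚ_p converging on an open annulus of outer radius 1 in the same sense as F, and that F·G = G·F = I as Laurent expansions: for every m ∈ ℤ the series Σ_{j∈ℤ} Fⱼ·G_{m−j}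 and Σ_{j∈ℤ} Gⱼ·F_{m−j} converge, both equal the identity matrix when m = 0, and both equal the zero matrix when m ≠ 0. Then the constant coefficient F₀ is an invertible matrix, with inverse G₀. -/
/-!
Write `B = t N`, so that `D = t d/dt + B` is a connection on the open unit disk with a regular
singularity at `0` and nilpotent residue `B₀ = N₋₁`. The equation for `F` says `D F = F D'`, where
`D' = t d/dt + p B(t ^ p)` is the Frobenius pullback of `D`; consequently `D' G = G D`. It is enough
to show that `F` and `G` have no negative coefficients, for then `F G = G F = 1` gives
`F₀ G₀ = G₀ F₀ = 1`.

All operators act on spaces `Bdd p r ρ` of Laurent series bounded on a circle `|t| = ρ`, and the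
measure of convergence is the exponential growth rate in `n` of the norms of the operators
`binom(D, n) = (t ^ n / n!) (d/dt) ^ n` (`Growth`). There are two ingredients.

* The Frobenius structure brings the growth rate close to `1` (`exists_growth`). If `D` has growth
  rate `η` at `σ = ρ ^ p`, then on the component along `t ^ a` of the decomposition
  `∑ t ^ a ℚ_p((t ^ p))` the pullback `D'` acts as `p D + a`, and the identity
  `(1 + z) ^ (p D + a) = (1 + z) ^ a ∑ binom(D, m) ((1 + z) ^ p - 1) ^ m` shows that `D'` has growth
  rate at most `max 1 (η ^ (1 / p)) (η / p)` at `ρ` (`Growth.frobenius`). As `F` is invertible, it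
  conjugates `D'` into `D`, which therefore has the same growth rate at `ρ`. Iterating, the growth
  rate tends to `1`, while the radius stays in a fixed interval `[σ₀, 1)`.

* A horizontal homomorphism `X` between connections `S` and `T` with nilpotent residues, given by a
  matrix Laurent series converging for `r₁ ≤ |t| < 1`, has no negative coefficients if the growth
  rate `η` at some `ρ` satisfies `η ^ (2 e) r₁ < ρ` (`no_negative`). Indeed, for the connection
  `X ↦ T X - X S` on homomorphisms, `binom(· + s, s) = ∏ (· + k) / k` over `1 ≤ k ≤ s` fixes `X`.
  Its `2 e`-th power annihilates the coefficients of `t ^ (-s), …, t ^ (-1)` one after the other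
  (`PoleLE.remove`), while its norm is `O(η ^ (2 e s))` (`opLE_regOp`), and the part of `X` of order
  less than `-s` has norm `O((r₁ / ρ) ^ s)`.
-/

/-- The norm of a matrix over `ℚ_p`: the maximum (supremum) of the p-adic norms of its
entries. -/
noncomputable def padicMatNorm (p : ℕ) [Fact p.Prime] {r : ℕ}
    (M : Matrix (Fin r) (Fin r) ℚ_[p]) : ℝ :=
  ⨆ i, ⨆ j, ‖M i j‖

/-! ### Binomial coefficients of elements of an algebra -/

open Polynomial in
/-- The binomial coefficient `binom(a, n) = a (a - 1) ⋯ (a - n + 1) / n!` of an element `a` of a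
(not necessarily commutative) algebra over a field `K` of characteristic zero. -/
noncomputable def opChoose (K : Type*) [Field K] {A : Type*} [Ring A] [Algebra K A]
    (a : A) (n : ℕ) : A :=
  ((n.factorial : K)⁻¹) • aeval a (descPochhammer K n)

section opChoose

open Polynomial

variable {K : Type*} [Field K] [CharZero K] {A : Type*} [Ring A] [Algebra K A]

omit [CharZero K] in
lemma opChoose_zero (a : A) : opChoose K a 0 = 1 := by
  simp [opChoose]

omit [CharZero K] in
lemma opChoose_succ (a : A) (n : ℕ) :
    opChoose K a (n + 1) = ((n + 1 : K)⁻¹) • (opChoose K a n * (a - (n : A))) := by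
  unfold opChoose
  rw [descPochhammer_succ_right, map_mul, Nat.factorial_succ, smul_mul_assoc, smul_smul]
  congr 1
  · push_cast
    rw [mul_inv]
  · simp

omit [CharZero K] in
lemma opChoose_succ' (a : A) (n : ℕ) :
    opChoose K a (n + 1) = ((n + 1 : K)⁻¹) • ((a - (n : A)) * opChoose K a n) := by
  unfold opChoose
  rw [descPochhammer_succ_right, mul_comm, map_mul, Nat.factorial_succ, mul_smul_comm, smul_smul]
  congr 1
  · push_cast
    rw [mul_inv]
  · simp

lemma opChoose_natCast (k n : ℕ) : opChoose K (k : K) n = (k.choose n : K) := by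
  have h : (n.factorial : K) ≠ 0 := by exact_mod_cast n.factorial_ne_zero
  rw [opChoose, coe_aeval_eq_eval, descPochhammer_eval_eq_descFactorial,
    Nat.descFactorial_eq_factorial_mul_choose, smul_eq_mul]
  push_cast
  field_simp

omit [CharZero K] in
lemma opChoose_map {B : Type*} [Ring B] [Algebra K B] (f : A →ₐ[K] B) (a : A) (n : ℕ) :
    f (opChoose K a n) = opChoose K (f a) n := by
  simp [opChoose, aeval_algHom_apply]

lemma opChoose_add {a b : A} (h : Commute a b) (n : ℕ) :
    opChoose K (a + b) n =
      ∑ ij ∈ Finset.HasAntidiagonal.antidiagonal n, opChoose K a ij.1 * opChoose K b ij.2 := by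
  have key : ∀ (x : A) (k : ℕ), aeval x (descPochhammer K k) = (descPochhammer ℤ k).smeval x := by
    intro x k
    rw [← descPochhammer_map (Int.castRingHom K), ← aeval_eq_smeval, aeval_def, eval₂_map, aeval_def]
    congr 1
    exact RingHom.ext_int _ _
  unfold opChoose
  rw [key, Ring.descPochhammer_smeval_add n h, Finset.smul_sum]
  refine Finset.sum_congr rfl fun ij hij => ?_
  rw [Finset.HasAntidiagonal.mem_antidiagonal] at hij
  rw [key, key, smul_mul_smul_comm, ← nsmul_eq_mul, ← Nat.cast_smul_eq_nsmul K, smul_smul]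
  congr 1
  have h1 := Nat.choose_mul_factorial_mul_factorial (n := n) (k := ij.1) (by omega)
  rw [show n - ij.1 = ij.2 by omega] at h1
  have h2 : (ij.1.factorial : K) ≠ 0 := by exact_mod_cast ij.1.factorial_ne_zero
  have h3 : (ij.2.factorial : K) ≠ 0 := by exact_mod_cast ij.2.factorial_ne_zero
  have h4 : (n.factorial : K) ≠ 0 := by exact_mod_cast n.factorial_ne_zero
  have h5 : (n.choose ij.1 : K) * ij.1.factorial * ij.2.factorial = n.factorial := by
    exact_mod_cast h1
  field_simp
  rw [← h5]

omit [CharZero K] in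
lemma opChoose_neg (a : A) (n : ℕ) :
    opChoose K (-a) (n + 1) = (-1 : K) ^ (n + 1) • opChoose K (a + (n : A)) (n + 1) := by
  -- a one-variable polynomial identity, checked in the commutative ring `K[X]`
  have key : (opChoose K (-(X : K[X])) (n + 1))
      = (-1 : K) ^ (n + 1) • opChoose K ((X : K[X]) + (n : K[X])) (n + 1) := by
    have e : ∀ (x : K[X]) (k : ℕ), aeval x (descPochhammer K k)
        = (descPochhammer K[X] k).eval x := by
      intro x k
      rw [← descPochhammer_map (algebraMap K K[X]), aeval_def, eval_map]
    unfold opChoose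
    rw [smul_comm, e, e, descPochhammer_eval_eq_ascPochhammer K[X] (X + (n : K[X]))]
    have h := ascPochhammer_eval_neg_eq_descPochhammer K[X] (-(X : K[X])) (n + 1)
    rw [neg_neg] at h
    rw [show (X : K[X]) + (n : K[X]) - ((n + 1 : ℕ) : K[X]) + 1 = X by push_cast; ring, h]
    congr 1
    rw [Algebra.smul_def, ← mul_assoc]
    simp [← mul_pow]
  have h := congrArg (aeval (R := K) a) key
  rw [map_smul, opChoose_map, opChoose_map] at h
  simpa using h

/-- The change of variables `a ↦ e a + x` on binomial coefficients, read off from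
`(1 + z) ^ (e a + x) = (1 + z) ^ x ∑ₘ binom(a, m) ((1 + z) ^ e - 1) ^ m`. -/
lemma opChoose_affine (e x : ℕ) (a : A) (n : ℕ) :
    opChoose K ((e : K) • a + (x : A)) n = ∑ m ∈ Finset.range (n + 1),
      (((1 + X : K[X]) ^ x * ((1 + X) ^ e - 1) ^ m).coeff n) • opChoose K a m := by
  have key : opChoose K ((e : K) • (X : K[X]) + (x : K[X])) n = ∑ m ∈ Finset.range (n + 1),
      (((1 + X : K[X]) ^ x * ((1 + X) ^ e - 1) ^ m).coeff n) • opChoose K (X : K[X]) m := by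
    apply eq_of_infinite_eval_eq
    -- both sides are polynomials, so it suffices to compare them at natural numbers
    refine Set.infinite_of_injective_forall_mem (f := fun k : ℕ => (k : K)) Nat.cast_injective ?_
    intro k
    have ev : ∀ (q : K[X]) (j : ℕ), eval (k : K) (opChoose K q j) = opChoose K (eval (k : K) q) j :=
      fun q j => by
        have := opChoose_map (K := K) (aeval (R := K) (k : K)) q j
        simpa [coe_aeval_eq_eval] using this
    simp only [Set.mem_ofPred_eq]
    rw [ev, eval_finsetSum]
    simp only [eval_smul, ev, eval_add, eval_X, eval_natCast, smul_eq_mul]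
    rw [show (e : K) * k + x = ((e * k + x : ℕ) : K) by push_cast; ring]
    simp only [opChoose_natCast]
    have gen : ((1 + X : K[X]) ^ (e * k + x)) = ∑ m ∈ Finset.range (k + 1),
        ((1 + X) ^ x * ((1 + X) ^ e - 1) ^ m) * ((k.choose m : ℕ) : K[X]) := by
      have := add_pow (((1 + X : K[X]) ^ e) - 1) 1 k
      rw [sub_add_cancel] at this
      rw [pow_add, pow_mul, this, mul_comm, Finset.mul_sum]
      refine Finset.sum_congr rfl fun m _ => ?_
      rw [one_pow]; ring
    have hc : ((e * k + x).choose n : K) = ((1 + X : K[X]) ^ (e * k + x)).coeff n := by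
      rw [coeff_one_add_X_pow]
    rw [hc, gen, finsetSum_coeff]
    simp only [coeff_mul_natCast]
    have hz : ∀ m, n < m → ((1 + X : K[X]) ^ x * ((1 + X) ^ e - 1) ^ m).coeff n = 0 := by
      intro m hm
      have hd : (X : K[X]) ^ m ∣ (1 + X : K[X]) ^ x * ((1 + X) ^ e - 1) ^ m := by
        refine Dvd.dvd.mul_left (pow_dvd_pow_of_dvd ?_ m) _
        have := sub_dvd_pow_sub_pow (1 + X : K[X]) 1 e
        simpa using this
      exact X_pow_dvd_iff.mp hd n hm
    rw [Finset.sum_subset (Finset.range_mono (show k + 1 ≤ n + k + 1 by omega)),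
      Finset.sum_subset (Finset.range_mono (show n + 1 ≤ n + k + 1 by omega))]
    · intro m _ hm
      rw [hz m (by simpa using hm), zero_mul]
    · intro m _ hm
      rw [Nat.choose_eq_zero_of_lt (by simpa using hm)]
      simp
  have h := congrArg (aeval (R := K) a) key
  rw [map_sum, opChoose_map] at h
  simp only [map_smul, opChoose_map, map_add, aeval_X, map_natCast] at h
  exact h

end opChoose

/-! ### Bounded Laurent series and multiplication operators -/

section series

variable {p : ℕ} [Fact p.Prime] {r : ℕ}

lemma padicMatNorm_nonneg (M : Matrix (Fin r) (Fin r) ℚ_[p]) : 0 ≤ padicMatNorm p M :=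
  Real.iSup_nonneg fun _ => Real.iSup_nonneg fun _ => norm_nonneg _

lemma norm_entry_le (M : Matrix (Fin r) (Fin r) ℚ_[p]) (i j : Fin r) :
    ‖M i j‖ ≤ padicMatNorm p M :=
  (le_ciSup (f := fun j => ‖M i j‖) (Set.finite_range _).bddAbove j).trans
    (le_ciSup (f := fun i => ⨆ j, ‖M i j‖) (Set.finite_range _).bddAbove i)

lemma padicMatNorm_zero : padicMatNorm p (0 : Matrix (Fin r) (Fin r) ℚ_[p]) = 0 := by
  simp [padicMatNorm]

lemma padicMatNorm_le {M : Matrix (Fin r) (Fin r) ℚ_[p]} {c : ℝ} (hc : 0 ≤ c)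
    (h : ∀ i j, ‖M i j‖ ≤ c) : padicMatNorm p M ≤ c :=
  Real.iSup_le (fun i => Real.iSup_le (fun j => h i j) hc) hc

open Matrix in
lemma norm_mulVec_le (M : Matrix (Fin r) (Fin r) ℚ_[p]) (v : Fin r → ℚ_[p]) :
    ‖M *ᵥ v‖ ≤ padicMatNorm p M * ‖v‖ := by
  have h0 : 0 ≤ padicMatNorm p M * ‖v‖ := mul_nonneg (padicMatNorm_nonneg M) (norm_nonneg v)
  refine (pi_norm_le_iff_of_nonneg h0).2 fun i => ?_
  change ‖∑ j, M i j * v j‖ ≤ _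
  refine IsUltrametricDist.norm_sum_le_of_forall_le_of_nonneg h0 fun j _ => ?_
  rw [norm_mul]
  exact mul_le_mul (norm_entry_le M i j) (norm_le_pi_norm v j) (norm_nonneg _)
    (padicMatNorm_nonneg M)

/-- `x` has weighted supremum norm at most `M` on the circle of radius `ρ`. -/
def NormLE (ρ M : ℝ) (x : ℤ → Fin r → ℚ_[p]) : Prop := ∀ i, ‖x i‖ * ρ ^ i ≤ M

/-- The space of vector-valued Laurent series that are bounded on the circle of radius `ρ`. -/
def Bdd (p : ℕ) [Fact p.Prime] (r : ℕ) (ρ : {ρ : ℝ // 0 < ρ}) :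
    Submodule ℚ_[p] (ℤ → Fin r → ℚ_[p]) where
  carrier := {x | ∃ M, NormLE ρ.1 M x}
  add_mem' := by
    rintro x y ⟨M, hM⟩ ⟨M', hM'⟩
    refine ⟨max M M', fun i => ?_⟩
    have hρ : 0 ≤ ρ.1 ^ i := (zpow_pos ρ.2 i).le
    refine (mul_le_mul_of_nonneg_right (IsUltrametricDist.norm_add_le_max (x i) (y i)) hρ).trans ?_
    rw [max_mul_of_nonneg _ _ hρ]
    exact max_le_max (hM i) (hM' i)
  zero_mem' := ⟨0, fun i => by simp⟩
  smul_mem' := by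
    rintro c x ⟨M, hM⟩
    refine ⟨‖c‖ * M, fun i => ?_⟩
    rw [Pi.smul_apply, norm_smul, mul_assoc]
    exact mul_le_mul_of_nonneg_left (hM i) (norm_nonneg c)

/-- `c` is a bound for the norm of the operator `T` between spaces of bounded Laurent series. -/
def OpLE {ρ σ : {ρ : ℝ // 0 < ρ}} (c : ℝ) (T : Bdd p r ρ →ₗ[ℚ_[p]] Bdd p r σ) : Prop :=
  ∀ M x, NormLE ρ.1 M x.1 → NormLE σ.1 (c * M) (T x).1

lemma NormLE.nonneg {ρ : {ρ : ℝ // 0 < ρ}} {M : ℝ} {x : ℤ → Fin r → ℚ_[p]}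
    (h : NormLE ρ.1 M x) : 0 ≤ M :=
  (mul_nonneg (norm_nonneg _) (zpow_pos ρ.2 0).le).trans (h 0)

variable {ρ σ : {ρ : ℝ // 0 < ρ}}

lemma NormLE.add {M : ℝ} {x y : ℤ → Fin r → ℚ_[p]}
    (hx : NormLE ρ.1 M x) (hy : NormLE ρ.1 M y) : NormLE ρ.1 M (x + y) := by
  intro i
  have hρ : 0 ≤ ρ.1 ^ i := (zpow_pos ρ.2 i).le
  refine (mul_le_mul_of_nonneg_right (IsUltrametricDist.norm_add_le_max (x i) (y i)) hρ).trans ?_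
  rw [max_mul_of_nonneg _ _ hρ]
  exact max_le (hx i) (hy i)

lemma OpLE.mono {T : Bdd p r ρ →ₗ[ℚ_[p]] Bdd p r σ} {c d : ℝ} (h : OpLE c T) (hcd : c ≤ d) :
    OpLE d T := fun M x hx i =>
  (h M x hx i).trans (mul_le_mul_of_nonneg_right hcd hx.nonneg)

lemma OpLE.mul {S T : Module.End ℚ_[p] (Bdd p r ρ)} {c d : ℝ} (hS : OpLE c S) (hT : OpLE d T) :
    OpLE (c * d) (S * T) := fun M x hx => by
  rw [mul_assoc]
  exact hS _ _ (hT _ _ hx)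

lemma OpLE.one : OpLE 1 (1 : Module.End ℚ_[p] (Bdd p r ρ)) := fun M x hx => by
  rw [one_mul]; exact hx

lemma OpLE.add {S T : Bdd p r ρ →ₗ[ℚ_[p]] Bdd p r σ} {c : ℝ} (hS : OpLE c S) (hT : OpLE c T) :
    OpLE c (S + T) := fun M x hx => (hS M x hx).add (hT M x hx)

lemma OpLE.smul {T : Bdd p r ρ →ₗ[ℚ_[p]] Bdd p r σ} {c : ℝ} (hT : OpLE c T) (k : ℚ_[p]) :
    OpLE (‖k‖ * c) (k • T) := fun M x hx i => by
  have : ((k • T) x).1 i = k • (T x).1 i := rfl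
  rw [this, norm_smul, mul_assoc, mul_assoc]
  exact mul_le_mul_of_nonneg_left (hT M x hx i) (norm_nonneg k)

lemma OpLE.zero {c : ℝ} (hc : 0 ≤ c) : OpLE c (0 : Bdd p r ρ →ₗ[ℚ_[p]] Bdd p r σ) :=
  fun M x hx i => by
    have h := mul_nonneg hc hx.nonneg
    simpa using h

lemma OpLE.sum {ι : Type*} {s : Finset ι} {T : ι → (Bdd p r ρ →ₗ[ℚ_[p]] Bdd p r σ)} {c : ℝ}
    (hc : 0 ≤ c) (hT : ∀ i ∈ s, OpLE c (T i)) : OpLE c (∑ i ∈ s, T i) := by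
  classical
  induction s using Finset.induction_on with
  | empty => simpa using OpLE.zero hc
  | insert a s ha ih =>
    rw [Finset.sum_insert ha]
    exact (hT a (Finset.mem_insert_self a s)).add
      (ih fun i hi => hT i (Finset.mem_insert_of_mem hi))

lemma OpLE.intCast (z : ℤ) : OpLE 1 ((z : ℤ) : Module.End ℚ_[p] (Bdd p r ρ)) := by
  have h := (OpLE.one (p := p) (r := r) (ρ := ρ)).smul (z : ℚ_[p])
  have e : ((z : ℚ_[p]) • (1 : Module.End ℚ_[p] (Bdd p r ρ))) = (z : Module.End ℚ_[p] (Bdd p r ρ)) := by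
    rw [Algebra.smul_def, mul_one, map_intCast]
  rw [e] at h
  exact h.mono (by simpa using Padic.norm_int_le_one z)

lemma OpLE.neg {T : Bdd p r ρ →ₗ[ℚ_[p]] Bdd p r σ} {c : ℝ} (hT : OpLE c T) : OpLE c (-T) :=
  fun M x hx i => by
    have e : ((-T) x).1 i = -(T x).1 i := rfl
    rw [e, norm_neg]
    exact hT M x hx i

/-- The Euler operator `t d/dt`. Its norm is at most `1`, as integers are `p`-adic integers. -/
noncomputable def euler (p : ℕ) [Fact p.Prime] (r : ℕ) (ρ : {ρ : ℝ // 0 < ρ}) :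
    Module.End ℚ_[p] (Bdd p r ρ) where
  toFun x := ⟨fun i => (i : ℚ_[p]) • x.1 i, by
    obtain ⟨M, hM⟩ := x.2
    refine ⟨M, fun i => ?_⟩
    rw [norm_smul]
    refine le_trans ?_ (hM i)
    refine mul_le_mul_of_nonneg_right ?_ (zpow_pos ρ.2 i).le
    exact mul_le_of_le_one_left (norm_nonneg _) (Padic.norm_int_le_one i)⟩
  map_add' x y := by ext i; simp [mul_add]
  map_smul' c x := by ext i; simp [mul_left_comm]

lemma opLE_euler : OpLE 1 (euler p r ρ) := fun M x hx i => by
  have e : (euler p r ρ x).1 i = (i : ℚ_[p]) • x.1 i := rfl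
  rw [e, norm_smul, one_mul]
  refine le_trans ?_ (hx i)
  refine mul_le_mul_of_nonneg_right ?_ (zpow_pos ρ.2 i).le
  exact mul_le_of_le_one_left (norm_nonneg _) (Padic.norm_int_le_one i)

/-- The matrix Laurent series `P` converges on the circle of radius `ρ`. -/
def Conv (ρ : ℝ) (P : ℤ → Matrix (Fin r) (Fin r) ℚ_[p]) : Prop :=
  Filter.Tendsto (fun i : ℤ => padicMatNorm p (P i) * ρ ^ i) Filter.cofinite (nhds 0)

lemma Conv.bound {P : ℤ → Matrix (Fin r) (Fin r) ℚ_[p]} {ρ : ℝ} (hP : Conv ρ P) :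
    ∃ c : ℝ, 1 ≤ c ∧ ∀ i, padicMatNorm p (P i) * ρ ^ i ≤ c := by
  have h := hP.eventually (gt_mem_nhds (show (0 : ℝ) < 1 by norm_num))
  rw [Filter.eventually_cofinite] at h
  obtain ⟨c, hc⟩ := (h.image fun i : ℤ => padicMatNorm p (P i) * ρ ^ i).bddAbove
  refine ⟨max c 1, le_max_right _ _, fun i => ?_⟩
  by_cases hi : padicMatNorm p (P i) * ρ ^ i < 1
  · exact hi.le.trans (le_max_right _ _)
  · exact (hc ⟨i, hi, rfl⟩).trans (le_max_left _ _)

open Matrix in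
lemma norm_term_le (ρ : {ρ : ℝ // 0 < ρ}) (P : Matrix (Fin r) (Fin r) ℚ_[p]) {M : ℝ}
    {x : ℤ → Fin r → ℚ_[p]} (hx : NormLE ρ.1 M x) (m j : ℤ) :
    ‖P *ᵥ x (m - j)‖ ≤ padicMatNorm p P * ρ.1 ^ j * (M * ρ.1 ^ (-m)) := by
  refine (norm_mulVec_le _ _).trans ?_
  have h := hx (m - j)
  have h1 : ‖x (m - j)‖ ≤ M * ρ.1 ^ (j - m) := by
    rw [← neg_sub m j, _root_.zpow_neg, ← div_eq_mul_inv, le_div_iff₀ (zpow_pos ρ.2 _)]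
    exact h
  refine (mul_le_mul_of_nonneg_left h1 (padicMatNorm_nonneg P)).trans (le_of_eq ?_)
  rw [sub_eq_add_neg, zpow_add₀ ρ.2.ne']; ring

open Matrix in
lemma summable_term {P : ℤ → Matrix (Fin r) (Fin r) ℚ_[p]} (hP : Conv ρ.1 P)
    {x : ℤ → Fin r → ℚ_[p]} (hx : ∃ M, NormLE ρ.1 M x) (m : ℤ) :
    Summable fun j : ℤ => P j *ᵥ x (m - j) := by
  obtain ⟨M, hM⟩ := hx
  refine NonarchimedeanAddGroup.summable_of_tendsto_cofinite_zero ?_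
  refine squeeze_zero_norm (fun j => norm_term_le ρ (P j) hM m j) ?_
  simpa using hP.mul_const (M * ρ.1 ^ (-m))

open Matrix in
lemma normLE_conv {P : ℤ → Matrix (Fin r) (Fin r) ℚ_[p]} {c : ℝ}
    (hc : ∀ i, padicMatNorm p (P i) * ρ.1 ^ i ≤ c)
    {M : ℝ} {x : ℤ → Fin r → ℚ_[p]} (hx : NormLE ρ.1 M x) :
    NormLE ρ.1 (c * M) (fun m => ∑' j : ℤ, P j *ᵥ x (m - j)) := by
  intro m
  have h : ‖∑' j : ℤ, P j *ᵥ x (m - j)‖ ≤ c * (M * ρ.1 ^ (-m)) := by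
    refine IsUltrametricDist.norm_tsum_le_of_forall_le fun j => ?_
    refine (norm_term_le ρ (P j) hx m j).trans ?_
    exact mul_le_mul_of_nonneg_right (hc j) (mul_nonneg hx.nonneg (zpow_pos ρ.2 _).le)
  refine (mul_le_mul_of_nonneg_right h (zpow_pos ρ.2 m).le).trans (le_of_eq ?_)
  rw [mul_assoc, mul_assoc, ← zpow_add₀ ρ.2.ne']; simp

open Matrix in
/-- Multiplication by a matrix Laurent series that converges on the circle of radius `ρ`. -/
noncomputable def mulOp (P : ℤ → Matrix (Fin r) (Fin r) ℚ_[p]) (hP : Conv ρ.1 P) :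
    Module.End ℚ_[p] (Bdd p r ρ) where
  toFun x := ⟨fun m => ∑' j : ℤ, P j *ᵥ x.1 (m - j), by
    obtain ⟨c, -, hc⟩ := hP.bound
    obtain ⟨M, hM⟩ := x.2
    exact ⟨_, normLE_conv hc hM⟩⟩
  map_add' x y := by
    apply Subtype.ext
    funext m
    change ∑' j : ℤ, P j *ᵥ (x.1 (m - j) + y.1 (m - j)) = _ + _
    simp_rw [mulVec_add]
    exact (summable_term hP x.2 m).tsum_add (summable_term hP y.2 m)
  map_smul' c x := by
    apply Subtype.ext
    funext m
    change ∑' j : ℤ, P j *ᵥ (c • x.1 (m - j)) = c • _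
    simp_rw [mulVec_smul]
    exact (summable_term hP x.2 m).tsum_const_smul c

open Matrix in
lemma mulOp_apply {P : ℤ → Matrix (Fin r) (Fin r) ℚ_[p]} (hP : Conv ρ.1 P) (x : Bdd p r ρ)
    (m : ℤ) : (mulOp P hP x).1 m = ∑' j : ℤ, P j *ᵥ x.1 (m - j) := rfl

lemma opLE_mulOp {P : ℤ → Matrix (Fin r) (Fin r) ℚ_[p]} (hP : Conv ρ.1 P) {c : ℝ}
    (hc : ∀ i, padicMatNorm p (P i) * ρ.1 ^ i ≤ c) : OpLE c (mulOp P hP) :=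
  fun _ _ hx => normLE_conv hc hx

open Matrix in
lemma mulOp_add {P Q R : ℤ → Matrix (Fin r) (Fin r) ℚ_[p]} (hP : Conv ρ.1 P) (hQ : Conv ρ.1 Q)
    (hR : Conv ρ.1 R) (h : ∀ i, R i = P i + Q i) : mulOp R hR = mulOp P hP + mulOp Q hQ := by
  refine LinearMap.ext fun x => Subtype.ext (funext fun m => ?_)
  change (mulOp R hR x).1 m = (mulOp P hP x).1 m + (mulOp Q hQ x).1 m
  rw [mulOp_apply, mulOp_apply, mulOp_apply]
  simp_rw [h, add_mulVec]
  exact (summable_term hP x.2 m).tsum_add (summable_term hQ x.2 m)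

open Matrix in
/-- The product of two multiplication operators is multiplication by the Cauchy product; all the
double series involved converge unconditionally since their terms tend to zero. -/
lemma hasSum_mulOp_mul {P Q : ℤ → Matrix (Fin r) (Fin r) ℚ_[p]} (hP : Conv ρ.1 P)
    (hQ : Conv ρ.1 Q) (hs : ∀ m : ℤ, Summable fun j : ℤ => P j * Q (m - j)) (x : Bdd p r ρ)
    (m : ℤ) : HasSum (fun n : ℤ => (∑' j : ℤ, P j * Q (n - j)) *ᵥ x.1 (m - n))
      ((mulOp P hP (mulOp Q hQ x)).1 m) := by
  rw [mulOp_apply]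
  simp_rw [mulOp_apply]
  obtain ⟨M, hM⟩ := x.2
  have hsum : Summable fun jk : ℤ × ℤ => P jk.1 *ᵥ (Q jk.2 *ᵥ x.1 (m - jk.1 - jk.2)) := by
    refine NonarchimedeanAddGroup.summable_of_tendsto_cofinite_zero ?_
    refine squeeze_zero_norm (a := fun jk : ℤ × ℤ => (padicMatNorm p (P jk.1) * ρ.1 ^ jk.1) *
      (padicMatNorm p (Q jk.2) * ρ.1 ^ jk.2) * (M * ρ.1 ^ (-m))) (fun jk => ?_) ?_
    · refine (norm_mulVec_le _ _).trans ?_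
      refine (mul_le_mul_of_nonneg_left (norm_term_le ρ (Q jk.2) hM (m - jk.1) jk.2)
        (padicMatNorm_nonneg _)).trans (le_of_eq ?_)
      rw [show -(m - jk.1) = jk.1 + -m by ring, zpow_add₀ ρ.2.ne']; ring
    · simpa using (tendsto_mul_cofinite_nhds_zero hP hQ).mul_const (M * ρ.1 ^ (-m))
  have pull : ∀ (A : Matrix (Fin r) (Fin r) ℚ_[p]) (f : ℤ → Fin r → ℚ_[p]), Summable f →
      A *ᵥ (∑' k, f k) = ∑' k, A *ᵥ f k := by
    intro A f hf
    exact hf.map_tsum (Matrix.mulVecLin A).toAddMonoidHom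
      (LinearMap.continuous_of_finiteDimensional (Matrix.mulVecLin A))
  have h1 : ∀ j, P j *ᵥ (∑' k, Q k *ᵥ x.1 (m - j - k)) =
      ∑' k, P j *ᵥ (Q k *ᵥ x.1 (m - j - k)) := fun j => pull _ _ (summable_term hQ x.2 (m - j))
  simp_rw [h1]
  rw [← hsum.tsum_prod' (fun j => hsum.comp_injective (Prod.mk_right_injective j))]
  -- the substitution `(n, j) ↦ (j, n - j)`
  let e : ℤ × ℤ ≃ ℤ × ℤ :=
    { toFun := fun q => (q.2, q.1 - q.2)
      invFun := fun q => (q.1 + q.2, q.1)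
      left_inv := fun q => by ext <;> simp
      right_inv := fun q => by ext <;> simp }
  refine ((e.hasSum_iff).2 hsum.hasSum).prod_fiberwise fun n => ?_
  have h2 := (hs n).hasSum.map
    (⟨⟨fun A => A *ᵥ x.1 (m - n), zero_mulVec _⟩, fun A B => add_mulVec A B _⟩ :
      Matrix (Fin r) (Fin r) ℚ_[p] →+ (Fin r → ℚ_[p]))
    (Continuous.matrix_mulVec continuous_id continuous_const)
  refine h2.congr_fun fun j => ?_
  change P j *ᵥ (Q (n - j) *ᵥ x.1 (m - j - (n - j))) = (P j * Q (n - j)) *ᵥ x.1 (m - n)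
  rw [mulVec_mulVec, show m - j - (n - j) = m - n by ring]

end series

/-! ### Growth of binomial coefficients of operators, and Frobenius pullback -/

section growth

variable {p : ℕ} [Fact p.Prime] {r : ℕ} {ρ σ : {ρ : ℝ // 0 < ρ}}

/-- The binomial coefficients of the operator `T` grow at most like `η ^ n`. For a connection
operator, `ρ / η` then bounds from below its radius of convergence at the generic point of the
circle of radius `ρ`. -/
def Growth (T : Module.End ℚ_[p] (Bdd p r ρ)) (η : ℝ) : Prop :=
  ∃ C : ℝ, 0 ≤ C ∧ ∀ n, OpLE (C * η ^ n) (opChoose ℚ_[p] T n)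

/-- A bound for the Gauss norm of radius `R` of a polynomial. -/
def GaussLE (R c : ℝ) (f : Polynomial ℚ_[p]) : Prop := ∀ i, ‖f.coeff i‖ * R ^ i ≤ c

lemma GaussLE.mul {R c d : ℝ} (hR : 0 ≤ R) {f g : Polynomial ℚ_[p]} (hf : GaussLE R c f)
    (hg : GaussLE R d g) : GaussLE R (c * d) (f * g) := by
  have hc : 0 ≤ c := le_trans (by positivity) (hf 0)
  have hd : 0 ≤ d := le_trans (by positivity) (hg 0)
  intro n
  rw [Polynomial.coeff_mul]
  obtain ⟨ij, hij, hle⟩ := IsUltrametricDist.exists_norm_finsetSum_le_of_nonempty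
    (t := Finset.HasAntidiagonal.antidiagonal n) ⟨(0, n), by simp⟩
    (fun ij => f.coeff ij.1 * g.coeff ij.2)
  rw [Finset.HasAntidiagonal.mem_antidiagonal] at hij
  refine (mul_le_mul_of_nonneg_right hle (by positivity)).trans ?_
  rw [norm_mul, ← hij, pow_add]
  calc _ = (‖f.coeff ij.1‖ * R ^ ij.1) * (‖g.coeff ij.2‖ * R ^ ij.2) := by ring
    _ ≤ c * d := mul_le_mul (hf _) (hg _) (by positivity) hc

lemma GaussLE.one {R : ℝ} : GaussLE R 1 (1 : Polynomial ℚ_[p]) := by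
  intro i
  rw [Polynomial.coeff_one]
  split_ifs with h
  · subst h; simp
  · simp

lemma GaussLE.pow {R c : ℝ} (hR : 0 ≤ R) {f : Polynomial ℚ_[p]} (hf : GaussLE R c f) (m : ℕ) :
    GaussLE R (c ^ m) (f ^ m) := by
  induction m with
  | zero => simpa using GaussLE.one
  | succ m ih => rw [pow_succ, pow_succ]; exact ih.mul hR hf

open Polynomial in
lemma gaussLE_one_add_pow {R : ℝ} (hR : 0 ≤ R) (hR1 : R ≤ 1) (x : ℕ) :
    GaussLE R 1 ((1 + X : Polynomial ℚ_[p]) ^ x) := by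
  intro i
  rw [coeff_one_add_X_pow]
  have h1 : ‖((x.choose i : ℕ) : ℚ_[p])‖ ≤ 1 := by
    exact_mod_cast Padic.norm_int_le_one (p := p) (x.choose i : ℤ)
  exact mul_le_one₀ h1 (by positivity) (pow_le_one₀ hR hR1)

open Polynomial in
lemma gaussLE_one_add_pow_sub_one {R : ℝ} (hR : 0 ≤ R) (hR1 : R ≤ 1) (x : ℕ) :
    GaussLE R 1 ((1 + X : Polynomial ℚ_[p]) ^ x - 1) := by
  intro i
  rw [coeff_sub, coeff_one]
  split_ifs with h
  · subst h; simp [coeff_one_add_X_pow]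
  · rw [sub_zero]; exact gaussLE_one_add_pow hR hR1 x i

open Polynomial in
/-- The Gauss norm of `(1 + z) ^ p - 1` is at most `max (R ^ p) (R / p)`, because this polynomial
is `z ^ p` modulo `p z`. -/
lemma gaussLE_frobenius {R d : ℝ} (hR : 0 ≤ R) (hR1 : R ≤ 1) (h1 : R ^ p ≤ d) (h2 : R ≤ p * d) :
    GaussLE R d ((1 + X : Polynomial ℚ_[p]) ^ p - 1) := by
  have hp : p.Prime := Fact.out
  have hd : 0 ≤ d := le_trans (by positivity) h1
  intro i
  rw [coeff_sub, coeff_one, coeff_one_add_X_pow]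
  rcases Nat.eq_zero_or_pos i with hi | hi
  · subst hi; simpa using hd
  rw [if_neg hi.ne', sub_zero]
  rcases lt_trichotomy i p with hip | hip | hip
  · have hdv : ‖((p.choose i : ℕ) : ℚ_[p])‖ ≤ (p : ℝ)⁻¹ := by
      obtain ⟨k, hk⟩ := hp.dvd_choose_self hi.ne' hip
      rw [hk]; push_cast
      rw [norm_mul, Padic.norm_p]
      refine mul_le_of_le_one_right (by positivity) ?_
      exact_mod_cast Padic.norm_int_le_one (p := p) (k : ℤ)
    have hp0 : (0 : ℝ) < p := by exact_mod_cast hp.pos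
    calc _ ≤ (p : ℝ)⁻¹ * R := mul_le_mul hdv (pow_le_of_le_one hR hR1 hi.ne') (by positivity)
            (by positivity)
      _ ≤ (p : ℝ)⁻¹ * (p * d) := by gcongr
      _ = d := by field_simp
  · subst hip; simpa using h1
  · rw [Nat.choose_eq_zero_of_lt hip]; simpa using hd

open Polynomial in
/-- Growth of the binomial coefficients under `T ↦ e T + x`, where `1 / η'` is the radius of a
Gauss norm for which `(1 + z) ^ e - 1` has norm at most `1 / η`. -/
lemma growth_affine {T : Module.End ℚ_[p] (Bdd p r ρ)} {η η' C : ℝ} (hη : 0 < η) (hη' : 1 ≤ η')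
    (hC : 0 ≤ C) (h : ∀ n, OpLE (C * η ^ n) (opChoose ℚ_[p] T n)) (e x : ℕ)
    (he : GaussLE η'⁻¹ η⁻¹ ((1 + X : Polynomial ℚ_[p]) ^ e - 1)) (n : ℕ) :
    OpLE (C * η' ^ n)
      (opChoose ℚ_[p] ((e : ℚ_[p]) • T + (x : Module.End ℚ_[p] (Bdd p r ρ))) n) := by
  have hη0 : 0 < η' := by linarith
  rw [opChoose_affine]
  refine OpLE.sum (by positivity) fun m _ => ?_
  refine ((h m).smul _).mono ?_
  have hR : (0 : ℝ) ≤ η'⁻¹ := by positivity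
  have hb := ((gaussLE_one_add_pow (p := p) hR (inv_le_one_of_one_le₀ hη') x).mul hR
    (he.pow hR m)) n
  rw [one_mul] at hb
  rw [inv_pow, inv_pow, mul_inv_le_iff₀ (by positivity)] at hb
  calc _ ≤ ((η ^ m)⁻¹ * η' ^ n) * (C * η ^ m) := mul_le_mul_of_nonneg_right hb (by positivity)
    _ = C * η' ^ n := by field_simp

lemma growth_shift {T : Module.End ℚ_[p] (Bdd p r ρ)} {η C : ℝ} (hη : 1 ≤ η) (hC : 0 ≤ C)
    (h : ∀ n, OpLE (C * η ^ n) (opChoose ℚ_[p] T n)) (x n : ℕ) :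
    OpLE (C * η ^ n) (opChoose ℚ_[p] (T + (x : Module.End ℚ_[p] (Bdd p r ρ))) n) := by
  have := growth_affine (by linarith) hη hC h 1 x (by
    intro i
    rw [pow_one, add_sub_cancel_left, Polynomial.coeff_X]
    split_ifs with hi
    · subst hi; simp
    · simp; linarith) n
  simpa using this

/-- Growth under `T ↦ -T`, from `binom(-T, n) = (-1) ^ n binom(T + n - 1, n)`. -/
lemma growth_neg {T : Module.End ℚ_[p] (Bdd p r ρ)} {η C : ℝ} (hη : 1 ≤ η) (hC : 0 ≤ C)
    (h : ∀ n, OpLE (C * η ^ n) (opChoose ℚ_[p] T n)) (n : ℕ) :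
    OpLE (C * η ^ n) (opChoose ℚ_[p] (-T) n) := by
  cases n with
  | zero => simpa [opChoose_zero] using h 0
  | succ n =>
    rw [opChoose_neg]
    refine ((growth_shift hη hC h n (n + 1)).smul _).mono (le_of_eq ?_)
    rw [norm_pow, norm_neg, norm_one, one_pow, one_mul]

lemma norm_inv_factorial_le (n : ℕ) : ‖((n.factorial : ℚ_[p])⁻¹)‖ ≤ (p : ℝ) ^ n := by
  have hp : p.Prime := Fact.out
  have h0 : (n.factorial : ℚ_[p]) ≠ 0 := by exact_mod_cast n.factorial_ne_zero
  rw [norm_inv, Padic.norm_eq_zpow_neg_valuation h0, Padic.valuation_natCast, zpow_neg, inv_inv,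
    zpow_natCast]
  refine pow_le_pow_right₀ (by exact_mod_cast hp.one_le) ?_
  have h := sub_one_mul_padicValNat_factorial (p := p) n
  have h2 : 1 ≤ p - 1 := by have := hp.two_le; omega
  nlinarith [Nat.sub_le n (p.digits n).sum]

/-- Any bounded operator has finite growth rate, because `‖1 / n!‖ ≤ p ^ n`. -/
lemma growth_of_opLE {T : Module.End ℚ_[p] (Bdd p r ρ)} {b : ℝ} (hb : 1 ≤ b) (hT : OpLE b T) :
    Growth T (p * b) := by
  refine ⟨1, zero_le_one, fun n => ?_⟩
  have key : OpLE (b ^ n) (Polynomial.aeval T (descPochhammer ℚ_[p] n)) := by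
    induction n with
    | zero => simpa using OpLE.one
    | succ n ih =>
      rw [descPochhammer_succ_right, map_mul, pow_succ]
      refine ih.mul ?_
      rw [map_sub, Polynomial.aeval_X, map_natCast, sub_eq_add_neg]
      have h := ((OpLE.intCast (p := p) (r := r) (ρ := ρ) (n : ℤ)).mono hb).neg
      rw [Int.cast_natCast] at h
      exact hT.add h
  refine (key.smul _).mono ?_
  rw [one_mul, mul_pow]
  exact mul_le_mul_of_nonneg_right (norm_inv_factorial_le n) (by positivity)

lemma opChoose_semiconj {T : Module.End ℚ_[p] (Bdd p r ρ)} {S : Module.End ℚ_[p] (Bdd p r σ)}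
    (f : Bdd p r ρ →ₗ[ℚ_[p]] Bdd p r σ) (h : ∀ x, f (T x) = S (f x)) (n : ℕ) (x : Bdd p r ρ) :
    f (opChoose ℚ_[p] T n x) = opChoose ℚ_[p] S n (f x) := by
  induction n with
  | zero => simp [opChoose_zero]
  | succ n ih =>
    rw [opChoose_succ', opChoose_succ']
    simp only [LinearMap.smul_apply, Module.End.mul_apply, LinearMap.sub_apply, map_smul, map_sub,
      h, ih, Module.End.natCast_apply, map_nsmul]

/-- The growth of the binomial coefficients is invariant under conjugation. -/
lemma Growth.conj {T S F G : Module.End ℚ_[p] (Bdd p r ρ)} {η cF cG : ℝ} (hcF : 0 ≤ cF)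
    (hcG : 0 ≤ cG) (hF : OpLE cF F) (hG : OpLE cG G) (hFG : F * G = 1) (h : F * T = S * F)
    (hT : Growth T η) : Growth S η := by
  obtain ⟨C, hC, hT⟩ := hT
  refine ⟨cF * C * cG, by positivity, fun n => ?_⟩
  have e : opChoose ℚ_[p] S n = F * opChoose ℚ_[p] T n * G := by
    have h1 : F * opChoose ℚ_[p] T n = opChoose ℚ_[p] S n * F :=
      LinearMap.ext fun x => opChoose_semiconj F (fun y => LinearMap.congr_fun h y) n x
    rw [h1, mul_assoc, hFG, mul_one]
  rw [e]
  exact ((hF.mul (hT n)).mul hG).mono (le_of_eq (by ring))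

/-- The section `x(t) ↦ (x_{p i + a})ᵢ`, extracting the component of `x` along `t ^ a` in the
decomposition of Laurent series in `t` over Laurent series in `t ^ p`. -/
noncomputable def section_ (a : ℕ) (hσ : σ.1 = ρ.1 ^ p) : Bdd p r ρ →ₗ[ℚ_[p]] Bdd p r σ where
  toFun x := ⟨fun i => x.1 (p * i + a), by
    obtain ⟨M, hM⟩ := x.2
    refine ⟨M * (ρ.1 ^ a)⁻¹, fun i => ?_⟩
    rw [le_mul_inv_iff₀ (pow_pos ρ.2 a), hσ, mul_assoc]
    refine le_trans (le_of_eq ?_) (hM (p * i + a))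
    rw [zpow_add₀ ρ.2.ne', zpow_mul]; simp⟩
  map_add' x y := rfl
  map_smul' c x := rfl

lemma normLE_section (a : ℕ) (hσ : σ.1 = ρ.1 ^ p) {M : ℝ} {x : Bdd p r ρ} (hx : NormLE ρ.1 M x.1) :
    NormLE σ.1 (M * (ρ.1 ^ a)⁻¹) (section_ a hσ x).1 := by
  intro i
  rw [le_mul_inv_iff₀ (pow_pos ρ.2 a), hσ, mul_assoc]
  refine le_trans (le_of_eq ?_) (hx (p * i + a))
  rw [zpow_add₀ ρ.2.ne', zpow_mul]; simp [section_]

/-- Frobenius pullback improves the growth rate: if `S` on the circle of radius `ρ` is the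
pullback of `T` along `t ↦ t ^ p`, then a growth rate `η` of `T` yields for `S` the growth rate
`max 1 (η ^ (1 / p)) (η / p)`. In terms of the sections, `S` acts as `p T + a` on the component
along `t ^ a`, so that the bound follows from that for `T ↦ p T + a`. -/
lemma Growth.frobenius {T : Module.End ℚ_[p] (Bdd p r σ)} {S : Module.End ℚ_[p] (Bdd p r ρ)}
    (hσ : σ.1 = ρ.1 ^ p) (hS : ∀ (a : ℕ) (x : Bdd p r ρ), section_ a hσ (S x) =
      ((p : ℚ_[p]) • T + (a : Module.End ℚ_[p] (Bdd p r σ))) (section_ a hσ x))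
    {η η' : ℝ} (hη : 0 < η) (hη' : 1 ≤ η') (h1 : η ≤ η' ^ p) (h2 : η ≤ p * η') (hT : Growth T η) :
    Growth S η' := by
  have hp : p.Prime := Fact.out
  obtain ⟨C, hC, hT⟩ := hT
  refine ⟨C, hC, fun n M x hx m => ?_⟩
  have hη0 : 0 < η' := by linarith
  have hp0 : (0 : ℤ) < p := by exact_mod_cast hp.pos
  have hpR : (0 : ℝ) < p := by exact_mod_cast hp.pos
  obtain ⟨a, ha⟩ := Int.eq_ofNat_of_zero_le (Int.emod_nonneg m hp0.ne')
  have hm : (p : ℤ) * (m / p) + a = m := by rw [← ha]; exact Int.mul_ediv_add_emod m p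
  have hg := growth_affine hη hη' hC hT p a (gaussLE_frobenius (by positivity)
    (inv_le_one_of_one_le₀ hη') (by rw [inv_pow]; exact inv_anti₀ hη h1) (by
      rw [← div_eq_mul_inv, inv_le_comm₀ hη0 (by positivity), inv_div, div_le_iff₀ (by positivity)]
      linarith)) n
  have hb := hg _ _ (normLE_section a hσ hx)
  rw [← opChoose_semiconj (section_ a hσ) (hS a)] at hb
  have hb' := hb (m / p)
  change ‖(opChoose ℚ_[p] S n x).1 (p * (m / p) + a)‖ * _ ≤ _ at hb'
  rw [hm, ← mul_assoc, le_mul_inv_iff₀ (pow_pos ρ.2 a), hσ, mul_assoc] at hb'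
  refine le_trans (le_of_eq ?_) hb'
  congr 1
  conv_lhs => rw [← hm]
  rw [zpow_add₀ ρ.2.ne', zpow_mul]; simp

end growth

/-! ### The induced connection on homomorphisms -/

section homConn

variable {K : Type*} [Field K] [CharZero K] {A : Type*} [Ring A] [Algebra K A]

/-- The connection `X ↦ T X - X S` induced on homomorphisms. -/
noncomputable def homConn (K : Type*) [Field K] {A : Type*} [Ring A] [Algebra K A] (T S : A) :
    Module.End K A := LinearMap.mulLeft K T - LinearMap.mulRight K S

/-- The operator `(D + k) ^ n`, for `D` the connection on homomorphisms. -/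
noncomputable def homShiftPow (K : Type*) [Field K] {A : Type*} [Ring A] [Algebra K A] (T S : A)
    (k : ℤ) (n : ℕ) : A →ₗ[K] A := (homConn K T S + (k : Module.End K A)) ^ n

/-- The `n`-th power of the operator `binom(D + s, s) = ∏ (D + k) / k`, over `1 ≤ k ≤ s`, for `D`
the connection on homomorphisms. -/
noncomputable def regOp (K : Type*) [Field K] {A : Type*} [Ring A] [Algebra K A] (T S : A)
    (s n : ℕ) : A →ₗ[K] A := (opChoose K (homConn K T S + (s : Module.End K A)) s) ^ n

omit [CharZero K] in
lemma homShiftPow_apply (T S X : A) (k m : ℤ) (n : ℕ) :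
    homShiftPow K T S k n X = ∑ i ∈ Finset.range (n + 1),
      ((-1 : K) ^ (n - i) * (n.choose i : K)) •
        ((T - ((m - k : ℤ) : A)) ^ i * (X * (S - (m : A)) ^ (n - i))) := by
  have hsplit : homConn K T S + (k : Module.End K A) =
      LinearMap.mulLeft K (T - ((m - k : ℤ) : A)) + LinearMap.mulRight K (-(S - (m : A))) := by
    refine LinearMap.ext fun Y => ?_
    simp only [homConn, LinearMap.add_apply, LinearMap.sub_apply, LinearMap.mulLeft_apply,
      LinearMap.mulRight_apply, Module.End.intCast_apply, sub_mul, mul_neg, mul_sub]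
    rw [zsmul_eq_mul, (Int.cast_commute m Y).eq.symm]
    push_cast
    rw [sub_mul]
    abel
  rw [homShiftPow, hsplit, (LinearMap.commute_mulLeft_right _ _).add_pow, LinearMap.sum_apply]
  refine Finset.sum_congr rfl fun i _ => ?_
  have hneg : ∀ (j : ℕ) (Y : A), (-Y) ^ j = ((-1 : K) ^ j) • Y ^ j := by
    intro j Y
    rw [neg_pow, Algebra.smul_def]
    simp
  rw [LinearMap.pow_mulLeft, LinearMap.pow_mulRight, hneg]
  simp only [Module.End.mul_apply, LinearMap.mulLeft_apply, LinearMap.mulRight_apply,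
    Module.End.natCast_apply, mul_smul_comm]
  rw [← Nat.cast_smul_eq_nsmul K, smul_mul_assoc, mul_smul_comm, smul_smul]

/-- Induction along the factors of `binom(D + s, s) ^ N`. -/
lemma regOp_induction (T S : A) (N : ℕ) (Q : ℤ → A → Prop)
    (hsmul : ∀ k X (c : K), Q k X → Q k (c • X))
    (hstep : ∀ (k : ℤ) X, Q k X → Q (k - 1) (homShiftPow K T S k N X))
    (s : ℕ) (X : A) (hX : Q s X) : Q 0 (regOp K T S s N X) := by
  have key : ∀ n : ℕ, Q ((s : ℤ) - n)
      (((opChoose K (homConn K T S + (s : Module.End K A)) n) ^ N) X) := by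
    intro n
    induction n with
    | zero => simpa [opChoose_zero] using hX
    | succ n ih =>
      have hc : Commute (homConn K T S + (s : Module.End K A) - (n : Module.End K A))
          (opChoose K (homConn K T S + (s : Module.End K A)) n) := by
        have h1 := (opChoose_succ (K := K) (homConn K T S + (s : Module.End K A)) n).symm.trans
          (opChoose_succ' _ n)
        have hne : ((n : K) + 1)⁻¹ ≠ 0 := inv_ne_zero (by exact_mod_cast n.succ_ne_zero)
        exact (smul_right_injective _ hne h1).symm
      rw [opChoose_succ', smul_pow, hc.mul_pow, LinearMap.smul_apply, Module.End.mul_apply]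
      have h2 := hsmul _ _ ((((n : K) + 1)⁻¹) ^ N) (hstep _ _ ih)
      rw [show ((s : ℤ) - (n : ℤ) - 1) = (s : ℤ) - ((n + 1 : ℕ) : ℤ) by push_cast; ring] at h2
      rw [homShiftPow] at h2
      push_cast at h2 ⊢
      rw [← add_sub_assoc] at h2
      exact h2
  simpa [regOp] using key s

/-- Horizontal homomorphisms are fixed by `binom(D + s, s)`. -/
lemma regOp_fix {T S X : A} (h : T * X = X * S) (s n : ℕ) : regOp K T S s n X = X := by
  have h0 : ∀ n : ℕ, opChoose K (homConn K T S + (s : Module.End K A)) n X =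
      opChoose K (s : K) n • X := by
    intro n
    induction n with
    | zero => simp [opChoose_zero]
    | succ n ih =>
      have hX : homConn K T S X = 0 := by simp [homConn, h]
      rw [opChoose_succ', opChoose_succ', LinearMap.smul_apply, Module.End.mul_apply, ih, map_smul,
        LinearMap.sub_apply, LinearMap.add_apply, hX, Module.End.natCast_apply,
        Module.End.natCast_apply, zero_add, ← Nat.cast_smul_eq_nsmul K,
        ← Nat.cast_smul_eq_nsmul K, ← sub_smul, smul_smul, smul_smul, smul_eq_mul]
      congr 1; ring
  induction n with
  | zero => simp [regOp]
  | succ n ih =>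
    rw [regOp, pow_succ, Module.End.mul_apply, h0, opChoose_natCast, Nat.choose_self,
      Nat.cast_one, one_smul]
    exact ih

omit [CharZero K] in
lemma opChoose_mulLeft (T : A) (n : ℕ) :
    opChoose K (LinearMap.mulLeft K T) n = LinearMap.mulLeft K (opChoose K T n) := by
  induction n with
  | zero => simp [opChoose_zero, Module.End.one_eq_id]
  | succ n ih =>
    refine LinearMap.ext fun Y => ?_
    rw [opChoose_succ', opChoose_succ', LinearMap.smul_apply, Module.End.mul_apply, ih]
    simp [sub_mul, mul_assoc]

omit [CharZero K] in
lemma opChoose_mulRight (T : A) (n : ℕ) :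
    opChoose K (LinearMap.mulRight K T) n = LinearMap.mulRight K (opChoose K T n) := by
  induction n with
  | zero => simp [opChoose_zero, Module.End.one_eq_id]
  | succ n ih =>
    refine LinearMap.ext fun Y => ?_
    rw [opChoose_succ', opChoose_succ, LinearMap.smul_apply, Module.End.mul_apply, ih]
    simp only [LinearMap.mulRight_apply, LinearMap.sub_apply, Module.End.natCast_apply,
      mul_smul_comm]
    rw [mul_sub, mul_sub, mul_assoc, nsmul_eq_mul, (Nat.cast_commute n _).eq, mul_assoc]

omit [CharZero K] in
lemma regOp_zero (T S X : A) (s : ℕ) : regOp K T S s 0 X = X := by simp [regOp]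

lemma regOp_succ (T S X : A) (s n : ℕ) :
    regOp K T S s (n + 1) X = ∑ ij ∈ Finset.HasAntidiagonal.antidiagonal s,
      opChoose K (T + (s : A)) ij.1 *
        (regOp K T S s n X * opChoose K (-S) ij.2) := by
  have hsplit : homConn K T S + (s : Module.End K A) =
      LinearMap.mulLeft K (T + (s : A)) + LinearMap.mulRight K (-S) := by
    refine LinearMap.ext fun Y => ?_
    simp only [homConn, LinearMap.add_apply, LinearMap.sub_apply, LinearMap.mulLeft_apply,
      LinearMap.mulRight_apply, Module.End.natCast_apply, add_mul, mul_neg]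
    rw [nsmul_eq_mul]
    abel
  rw [regOp, pow_succ', Module.End.mul_apply, ← regOp, hsplit, opChoose_add (LinearMap.commute_mulLeft_right _ _), LinearMap.sum_apply]
  refine Finset.sum_congr rfl fun ij _ => ?_
  rw [opChoose_mulLeft, opChoose_mulRight, Module.End.mul_apply, LinearMap.mulLeft_apply,
    LinearMap.mulRight_apply]

end homConn

/-! ### Orders of vanishing and nilpotent residues -/

section order

variable {p : ℕ} [Fact p.Prime] {r : ℕ} {ρ : {ρ : ℝ // 0 < ρ}}

/-- The Laurent series `x` has order of vanishing at least `m` at `t = 0`. -/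
def OrdGE (m : ℤ) (x : Bdd p r ρ) : Prop := ∀ i < m, x.1 i = 0

/-- The operator `X` lowers orders of vanishing by at most `k`. -/
def PoleLE (k : ℤ) (X : Module.End ℚ_[p] (Bdd p r ρ)) : Prop :=
  ∀ m x, OrdGE m x → OrdGE (m - k) (X x)

/-- `T` preserves orders of vanishing, and acts on the leading coefficients in degree `m` as `m`
plus an endomorphism whose `e`-th power is zero: all powers `(T - m) ^ n` with `n ≥ e` raise the
order of vanishing of a series of order at least `m`. -/
def NilRes (e : ℕ) (T : Module.End ℚ_[p] (Bdd p r ρ)) : Prop :=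
  ∀ (m : ℤ) x, OrdGE m x → (∀ c : ℤ, OrdGE m ((T - (c : Module.End ℚ_[p] (Bdd p r ρ))) x)) ∧
    ∀ n ≥ e, OrdGE (m + 1) (((T - (m : Module.End ℚ_[p] (Bdd p r ρ))) ^ n) x)

lemma OrdGE.add {m : ℤ} {x y : Bdd p r ρ} (hx : OrdGE m x) (hy : OrdGE m y) : OrdGE m (x + y) := by
  intro i hi
  have e : (x + y).1 i = x.1 i + y.1 i := rfl
  rw [e, hx i hi, hy i hi, add_zero]

lemma OrdGE.smul {m : ℤ} {x : Bdd p r ρ} (hx : OrdGE m x) (c : ℚ_[p]) : OrdGE m (c • x) := by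
  intro i hi
  have e : (c • x).1 i = c • x.1 i := rfl
  rw [e, hx i hi, smul_zero]

lemma OrdGE.zero {m : ℤ} : OrdGE m (0 : Bdd p r ρ) := fun _ _ => rfl

lemma OrdGE.sum {m : ℤ} {s : Finset ℕ} {f : ℕ → Bdd p r ρ} (hf : ∀ i ∈ s, OrdGE m (f i)) :
    OrdGE m (∑ i ∈ s, f i) := by
  induction s using Finset.induction_on with
  | empty => simpa using OrdGE.zero
  | insert a s ha ih =>
    rw [Finset.sum_insert ha]
    exact (hf a (Finset.mem_insert_self a s)).add
      (ih fun i hi => hf i (Finset.mem_insert_of_mem hi))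

lemma OrdGE.mono {m n : ℤ} {x : Bdd p r ρ} (hx : OrdGE m x) (h : n ≤ m) : OrdGE n x :=
  fun i hi => hx i (by omega)

lemma PoleLE.smul {k : ℤ} {X : Module.End ℚ_[p] (Bdd p r ρ)} (hX : PoleLE k X) (c : ℚ_[p]) :
    PoleLE k (c • X) := fun m x hx => (hX m x hx).smul c

/-- The connection operator `t d/dt + P`. -/
noncomputable def nabla (P : ℤ → Matrix (Fin r) (Fin r) ℚ_[p]) (hP : Conv ρ.1 P) :
    Module.End ℚ_[p] (Bdd p r ρ) := euler p r ρ + mulOp P hP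

open Matrix in
lemma nabla_apply {P : ℤ → Matrix (Fin r) (Fin r) ℚ_[p]} (hP : Conv ρ.1 P) (x : Bdd p r ρ)
    (m : ℤ) : (nabla P hP x).1 m = (m : ℚ_[p]) • x.1 m + ∑' j : ℤ, P j *ᵥ x.1 (m - j) := rfl

open Matrix in
lemma mulOp_poleLE {P : ℤ → Matrix (Fin r) (Fin r) ℚ_[p]} (hP : Conv ρ.1 P) {k : ℤ}
    (h : ∀ j < -k, P j = 0) : PoleLE k (mulOp P hP) := by
  intro m x hx i hi
  rw [mulOp_apply]
  refine (tsum_congr fun j => ?_).trans tsum_zero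
  by_cases hj : j < -k
  · rw [h j hj, zero_mulVec]
  · rw [hx (i - j) (by omega), mulVec_zero]

open Matrix in
/-- The hypothesis of nilpotent residue, for a connection `t d/dt + P` with `P` holomorphic. -/
lemma nilRes_nabla {P : ℤ → Matrix (Fin r) (Fin r) ℚ_[p]} (hP : Conv ρ.1 P)
    (h : ∀ j < 0, P j = 0) {e : ℕ} (he : P 0 ^ e = 0) : NilRes e (nabla P hP) := by
  have happ : ∀ (c : ℤ) (x : Bdd p r ρ) (i : ℤ),
      ((nabla P hP - (c : Module.End ℚ_[p] (Bdd p r ρ))) x).1 i =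
      (i : ℚ_[p]) • x.1 i + ∑' j : ℤ, P j *ᵥ x.1 (i - j) - (c : ℚ_[p]) • x.1 i := by
    intro c x i
    have e : ((c : Module.End ℚ_[p] (Bdd p r ρ)) x) = (c : ℚ_[p]) • x := by
      rw [Module.End.intCast_apply]
      exact (Int.cast_smul_eq_zsmul ℚ_[p] c x).symm
    rw [LinearMap.sub_apply, e]
    rfl
  have hgen : ∀ (m : ℤ) (x : Bdd p r ρ), OrdGE m x → ∀ c : ℤ,
      OrdGE m ((nabla P hP - (c : Module.End ℚ_[p] (Bdd p r ρ))) x) := by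
    intro m x hx c i hi
    have h1 := mulOp_poleLE hP (k := 0) (by simpa using h) m x hx i (by simpa using hi)
    rw [mulOp_apply] at h1
    rw [happ, hx i hi, h1]
    simp
  have hlead : ∀ (m : ℤ) (x : Bdd p r ρ), OrdGE m x →
      ((nabla P hP - (m : Module.End ℚ_[p] (Bdd p r ρ))) x).1 m = P 0 *ᵥ x.1 m := by
    intro m x hx
    rw [happ, add_sub_cancel_left, tsum_eq_single 0]
    · simp
    · intro j hj
      rcases lt_or_gt_of_ne hj with hj | hj
      · rw [h j hj, zero_mulVec]
      · rw [hx (m - j) (by omega), mulVec_zero]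
  intro m x hx
  refine ⟨hgen m x hx, fun n hn => ?_⟩
  have hpow : ∀ n : ℕ, OrdGE m (((nabla P hP - (m : Module.End ℚ_[p] (Bdd p r ρ))) ^ n) x) ∧
      (((nabla P hP - (m : Module.End ℚ_[p] (Bdd p r ρ))) ^ n) x).1 m = (P 0 ^ n) *ᵥ x.1 m := by
    intro n
    induction n with
    | zero => simpa using hx
    | succ n ih =>
      rw [pow_succ', Module.End.mul_apply]
      refine ⟨hgen m _ ih.1 m, ?_⟩
      rw [hlead m _ ih.1, ih.2, mulVec_mulVec, pow_succ']
  intro i hi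
  rcases lt_or_eq_of_le (Int.lt_add_one_iff.mp hi) with hi | hi
  · exact (hpow n).1 i hi
  · rw [hi, (hpow n).2, pow_eq_zero_of_le hn he, zero_mulVec]

lemma NilRes.pow_mem {e : ℕ} {T : Module.End ℚ_[p] (Bdd p r ρ)} (hT : NilRes e T) {m : ℤ}
    {x : Bdd p r ρ} (hx : OrdGE m x) (c : ℤ) (n : ℕ) :
    OrdGE m (((T - (c : Module.End ℚ_[p] (Bdd p r ρ))) ^ n) x) := by
  induction n with
  | zero => simpa using hx
  | succ n ih =>
    rw [pow_succ', Module.End.mul_apply]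
    exact (hT m _ ih).1 c

/-- Since the induced connection has eigenvalue `-k` in degree `-k`, the operator
`(D + k) ^ (2 e)` kills the leading term of a homomorphism with a pole of order `k`. -/
lemma PoleLE.step {e : ℕ} {T S X : Module.End ℚ_[p] (Bdd p r ρ)} (hT : NilRes e T)
    (hS : NilRes e S) {k : ℤ} (hX : PoleLE k X) :
    PoleLE (k - 1) (homShiftPow ℚ_[p] T S k (2 * e) X) := by
  intro m x hx
  rw [homShiftPow_apply T S X k m, LinearMap.sum_apply]
  refine OrdGE.sum fun i hi => OrdGE.smul ?_ _
  change OrdGE _ (((T - ((m - k : ℤ) : Module.End ℚ_[p] (Bdd p r ρ))) ^ i)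
    (X (((S - (m : Module.End ℚ_[p] (Bdd p r ρ))) ^ (2 * e - i)) x)))
  by_cases hie : e ≤ i
  · have h1 := hX m _ (hS.pow_mem hx m (2 * e - i))
    exact ((hT (m - k) _ h1).2 i hie).mono (by omega)
  · have h1 := hX (m + 1) _ ((hS m x hx).2 (2 * e - i) (by omega))
    exact (hT.pow_mem h1 (m - k) i).mono (by omega)

/-- A power of `binom(D + s, s)` removes poles of order at most `s`. -/
lemma PoleLE.remove {e : ℕ} {T S X : Module.End ℚ_[p] (Bdd p r ρ)} (hT : NilRes e T)
    (hS : NilRes e S) {s : ℕ} (hX : PoleLE s X) :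
    PoleLE 0 (regOp ℚ_[p] T S s (2 * e) X) :=
  regOp_induction T S (2 * e) PoleLE (fun _ _ c h => h.smul c) (fun _ _ h => h.step hT hS) s X hX

/-- The growth rates of `T` and `S` control the norm of `binom(D + s, s)`: as left and right
multiplications commute, it expands by the Vandermonde identity. -/
lemma opLE_regOp {T S : Module.End ℚ_[p] (Bdd p r ρ)} {η C D : ℝ} (hη : 1 ≤ η) (hC : 0 ≤ C)
    (hD : 0 ≤ D) (hT : ∀ n, OpLE (C * η ^ n) (opChoose ℚ_[p] T n))
    (hS : ∀ n, OpLE (D * η ^ n) (opChoose ℚ_[p] S n)) (s K : ℕ)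
    {X : Module.End ℚ_[p] (Bdd p r ρ)} {c : ℝ} (hc : 0 ≤ c) (hX : OpLE c X) :
    OpLE ((C * D * η ^ s) ^ K * c) (regOp ℚ_[p] T S s K X) := by
  induction K with
  | zero => simpa [regOp_zero] using hX
  | succ K ih =>
    rw [regOp_succ]
    refine OpLE.sum (by positivity) fun ij hij => ?_
    rw [Finset.HasAntidiagonal.mem_antidiagonal] at hij
    refine ((growth_shift hη hC hT s ij.1).mul (ih.mul (growth_neg hη hD hS ij.2))).mono
      (le_of_eq ?_)
    rw [pow_succ, ← hij, pow_add]; ring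

end order

/-! ### Horizontal homomorphisms have no negative coefficients -/

section vanishing

variable {p : ℕ} [Fact p.Prime] {r : ℕ} {ρ : {ρ : ℝ // 0 < ρ}}

lemma Conv.trunc {P : ℤ → Matrix (Fin r) (Fin r) ℚ_[p]} (hP : Conv ρ.1 P) (q : ℤ → Prop)
    [DecidablePred q] : Conv ρ.1 (fun i => if q i then P i else 0) := by
  refine squeeze_zero (fun i => mul_nonneg (padicMatNorm_nonneg _) (zpow_pos ρ.2 i).le)
    (fun i => ?_) hP
  dsimp only
  split_ifs
  · exact le_rfl
  · rw [padicMatNorm_zero, zero_mul]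
    exact mul_nonneg (padicMatNorm_nonneg _) (zpow_pos ρ.2 i).le

/-- The constant Laurent series `v`. -/
noncomputable def constSeries (ρ : {ρ : ℝ // 0 < ρ}) (v : Fin r → ℚ_[p]) : Bdd p r ρ :=
  ⟨Pi.single 0 v, ‖v‖, fun i => by
    by_cases hi : i = 0
    · subst hi; simp
    · simp [Pi.single_eq_of_ne hi]⟩

lemma normLE_constSeries (v : Fin r → ℚ_[p]) : NormLE ρ.1 ‖v‖ (constSeries ρ v).1 := by
  intro i
  by_cases hi : i = 0
  · subst hi; simp [constSeries]
  · simp [constSeries, Pi.single_eq_of_ne hi]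

open Matrix in
lemma mulOp_constSeries {P : ℤ → Matrix (Fin r) (Fin r) ℚ_[p]} (hP : Conv ρ.1 P)
    (v : Fin r → ℚ_[p]) (m : ℤ) : (mulOp P hP (constSeries ρ v)).1 m = P m *ᵥ v := by
  rw [mulOp_apply, tsum_eq_single m]
  · simp [constSeries]
  · intro j hj
    have : m - j ≠ 0 := by omega
    simp [constSeries, Pi.single_eq_of_ne this]

open Matrix Filter in
/-- A horizontal homomorphism has no negative coefficients, provided that its annulus of
convergence is large compared to the growth of the two connections. The operator
`binom(D + s, s) ^ (2 e)` fixes it; the part of order `≥ -s` is sent to something without negative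
coefficients, and the contribution of the part of order `< -s` tends to zero with `s`. -/
lemma no_negative {T S : Module.End ℚ_[p] (Bdd p r ρ)} {P : ℤ → Matrix (Fin r) (Fin r) ℚ_[p]}
    (hP : Conv ρ.1 P) {e : ℕ} {η r₁ c : ℝ} (hη : 1 ≤ η) (hT : Growth T η) (hS : Growth S η)
    (hTn : NilRes e T) (hSn : NilRes e S) (hrel : T * mulOp P hP = mulOp P hP * S)
    (hr₁ : 0 < r₁) (hc : ∀ i, padicMatNorm p (P i) * r₁ ^ i ≤ c)
    (hsmall : η ^ (2 * e) * r₁ < ρ.1) (i : ℤ) (hi : i < 0) : P i = 0 := by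
  obtain ⟨C, hC, hT⟩ := hT
  obtain ⟨D, hD, hS⟩ := hS
  have hρ := ρ.2
  have hc0 : 0 ≤ c := (mul_nonneg (padicMatNorm_nonneg _) (zpow_pos hr₁ 0).le).trans (hc 0)
  have hr₁ρ : r₁ ≤ ρ.1 := by
    have := one_le_pow₀ hη (n := 2 * e)
    nlinarith
  have key : ∀ (v : Fin r → ℚ_[p]) (s : ℕ), ‖P i *ᵥ v‖ * ρ.1 ^ i ≤
      (C * D) ^ (2 * e) * c * ‖v‖ * (η ^ (2 * e) * r₁ / ρ.1) ^ s := by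
    intro v s
    set lo : ℤ → Matrix (Fin r) (Fin r) ℚ_[p] := fun i => if i < -(s : ℤ) then P i else 0
      with hlo
    set hi' : ℤ → Matrix (Fin r) (Fin r) ℚ_[p] := fun i => if -(s : ℤ) ≤ i then P i else 0
      with hhi
    have hloC : Conv ρ.1 lo := hP.trunc _
    have hhiC : Conv ρ.1 hi' := hP.trunc _
    have hadd : mulOp P hP = mulOp hi' hhiC + mulOp lo hloC := by
      refine mulOp_add _ _ _ fun i => ?_
      by_cases h : i < -(s : ℤ)
      · simp [hlo, hhi, h, not_le.2 h]
      · simp [hlo, hhi, h, not_lt.1 h]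
    have hloLE : OpLE (c * (r₁ / ρ.1) ^ s) (mulOp lo hloC) := by
      refine opLE_mulOp _ fun j => ?_
      have h0 : 0 ≤ c * (r₁ / ρ.1) ^ s := by positivity
      by_cases h : j < -(s : ℤ)
      · simp only [hlo, if_pos h]
        obtain ⟨n, rfl⟩ : ∃ n : ℕ, j = -(n : ℤ) := ⟨j.natAbs, by omega⟩
        have hn : s ≤ n := by omega
        calc padicMatNorm p (P (-(n : ℤ))) * ρ.1 ^ (-(n : ℤ))
            = padicMatNorm p (P (-(n : ℤ))) * r₁ ^ (-(n : ℤ)) * (r₁ / ρ.1) ^ n := by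
              rw [_root_.zpow_neg, _root_.zpow_neg, zpow_natCast, zpow_natCast, div_pow]
              field_simp
          _ ≤ c * (r₁ / ρ.1) ^ n := mul_le_mul_of_nonneg_right (hc _) (by positivity)
          _ ≤ c * (r₁ / ρ.1) ^ s := mul_le_mul_of_nonneg_left
              (pow_le_pow_of_le_one (by positivity) ((div_le_one hρ).2 hr₁ρ) hn) hc0
      · simp only [hlo, if_neg h, padicMatNorm_zero, zero_mul]
        exact h0
    have hhiP : PoleLE s (mulOp hi' hhiC) := mulOp_poleLE _ fun j hj => by
      simp [hhi, not_le.2 hj]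
    have hfix : regOp ℚ_[p] T S s (2 * e) (mulOp P hP) = mulOp P hP :=
      regOp_fix hrel s (2 * e)
    rw [hadd, map_add] at hfix
    have hval : (mulOp P hP (constSeries ρ v)).1 i =
        (regOp ℚ_[p] T S s (2 * e) (mulOp hi' hhiC) (constSeries ρ v)).1 i +
        (regOp ℚ_[p] T S s (2 * e) (mulOp lo hloC) (constSeries ρ v)).1 i := by
      rw [hadd, ← hfix]; rfl
    have hord : OrdGE 0 (constSeries ρ v) := fun j hj => by
      simp [constSeries, Pi.single_eq_of_ne hj.ne]
    rw [(hhiP.remove hTn hSn) 0 _ hord i (by simpa using hi), zero_add,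
      mulOp_constSeries] at hval
    rw [hval]
    refine (opLE_regOp hη hC hD hT hS s (2 * e) (by positivity) hloLE _ _
      (normLE_constSeries v) i).trans (le_of_eq ?_)
    rw [mul_pow (C * D), ← pow_mul, mul_comm s, pow_mul, div_pow, div_pow, mul_pow _ r₁]
    ring
  have hlim : ∀ v : Fin r → ℚ_[p], P i *ᵥ v = 0 := by
    intro v
    have h1 : Tendsto (fun s : ℕ => (C * D) ^ (2 * e) * c * ‖v‖ *
        (η ^ (2 * e) * r₁ / ρ.1) ^ s) atTop (nhds 0) := by
      have := (tendsto_pow_atTop_nhds_zero_of_lt_one (by positivity)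
        ((div_lt_one hρ).2 hsmall)).const_mul ((C * D) ^ (2 * e) * c * ‖v‖)
      simpa using this
    have h2 := ge_of_tendsto' h1 (key v)
    have h3 := zpow_pos hρ i
    have h4 : ‖P i *ᵥ v‖ ≤ 0 := by
      by_contra h
      have := mul_pos (not_le.1 h) h3
      linarith
    simpa using h4
  refine Matrix.ext fun a b => ?_
  have h := congrFun (hlim (Pi.single b 1)) a
  simpa using h

end vanishing

/-! ### Horizontality and Frobenius pullback of matrix Laurent series -/

section frobenius

variable {p : ℕ} [Fact p.Prime] {r : ℕ} {ρ σ : {ρ : ℝ // 0 < ρ}}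

/-- The matrix `p B(t ^ p)` of the Frobenius pullback of the connection `t d/dt + B(t)`. -/
noncomputable def frob (B : ℤ → Matrix (Fin r) (Fin r) ℚ_[p]) (i : ℤ) :
    Matrix (Fin r) (Fin r) ℚ_[p] :=
  if (p : ℤ) ∣ i then (p : ℚ_[p]) • B (i / p) else 0

lemma frob_mul (B : ℤ → Matrix (Fin r) (Fin r) ℚ_[p]) (k : ℤ) :
    frob B (p * k) = (p : ℚ_[p]) • B k := by
  have hp : (p : ℤ) ≠ 0 := by exact_mod_cast (Fact.out : p.Prime).ne_zero
  rw [frob, if_pos (dvd_mul_right _ _), Int.mul_ediv_cancel_left _ hp]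

lemma frob_of_notMem_range (B : ℤ → Matrix (Fin r) (Fin r) ℚ_[p]) {i : ℤ}
    (h : i ∉ Set.range fun k : ℤ => (p : ℤ) * k) : frob B i = 0 :=
  if_neg fun ⟨k, hk⟩ => h ⟨k, hk.symm⟩

lemma mul_prime_injective : Function.Injective fun k : ℤ => (p : ℤ) * k :=
  mul_right_injective₀ (by exact_mod_cast (Fact.out : p.Prime).ne_zero)

lemma Conv.frob {B : ℤ → Matrix (Fin r) (Fin r) ℚ_[p]} {ρ : ℝ} (hρ : 0 < ρ)
    (hB : Conv (ρ ^ p) B) : Conv ρ (frob B) := by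
  have hle : ∀ k : ℤ, padicMatNorm p (_root_.frob B (p * k)) * ρ ^ ((p : ℤ) * k) ≤
      padicMatNorm p (B k) * (ρ ^ p) ^ k := by
    intro k
    rw [frob_mul, zpow_mul, zpow_natCast]
    refine mul_le_mul_of_nonneg_right ?_ (zpow_pos (pow_pos hρ p) k).le
    refine padicMatNorm_le (padicMatNorm_nonneg _) fun i j => ?_
    rw [Matrix.smul_apply, norm_smul]
    refine (mul_le_of_le_one_left (norm_nonneg _) ?_).trans (norm_entry_le _ i j)
    exact_mod_cast Padic.norm_int_le_one (p := p) (p : ℤ)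
  have hnn : ∀ i : ℤ, 0 ≤ padicMatNorm p (_root_.frob B i) * ρ ^ i := fun i =>
    mul_nonneg (padicMatNorm_nonneg _) (zpow_pos hρ i).le
  refine (nhds_basis_Ioo_pos (0 : ℝ)).tendsto_right_iff.2 fun ε hε => ?_
  have h := hB.eventually (gt_mem_nhds hε)
  rw [Filter.eventually_cofinite] at h ⊢
  refine (h.image fun k : ℤ => (p : ℤ) * k).subset fun i hi => ?_
  have hi' : ε ≤ padicMatNorm p (_root_.frob B i) * ρ ^ i := by
    by_contra hlt
    exact hi ⟨by linarith [hnn i], by linarith⟩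
  by_cases hr : i ∈ Set.range fun k : ℤ => (p : ℤ) * k
  · obtain ⟨k, rfl⟩ := hr
    exact ⟨k, not_lt.2 (hi'.trans (hle k)), rfl⟩
  · rw [frob_of_notMem_range B hr, padicMatNorm_zero, zero_mul] at hi'
    linarith

open Matrix in
/-- On the component along `t ^ a`, the Frobenius pullback of a connection `D` acts as `p D + a`. -/
lemma section_nabla_frob (hσ : σ.1 = ρ.1 ^ p) {B : ℤ → Matrix (Fin r) (Fin r) ℚ_[p]}
    (hB : Conv σ.1 B) (hB' : Conv ρ.1 (frob B)) (a : ℕ) (x : Bdd p r ρ) :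
    section_ a hσ (nabla (frob B) hB' x) =
      ((p : ℚ_[p]) • nabla B hB + (a : Module.End ℚ_[p] (Bdd p r σ))) (section_ a hσ x) := by
  refine Subtype.ext (funext fun i => ?_)
  have e1 : (section_ a hσ (nabla (frob B) hB' x)).1 i =
      ((p * i + a : ℤ) : ℚ_[p]) • x.1 (p * i + a) +
        ∑' j : ℤ, frob B j *ᵥ x.1 (p * i + a - j) := rfl
  have e2 : (((p : ℚ_[p]) • nabla B hB + (a : Module.End ℚ_[p] (Bdd p r σ)))
      (section_ a hσ x)).1 i = (p : ℚ_[p]) • ((i : ℚ_[p]) • x.1 (p * i + a) +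
        ∑' k : ℤ, B k *ᵥ x.1 (p * (i - k) + a)) + (a : ℚ_[p]) • x.1 (p * i + a) := by
    have e3 : (a : Module.End ℚ_[p] (Bdd p r σ)) (section_ a hσ x) =
        (a : ℚ_[p]) • section_ a hσ x := by
      rw [Module.End.natCast_apply]
      exact (Nat.cast_smul_eq_nsmul ℚ_[p] a _).symm
    rw [LinearMap.add_apply, e3]
    rfl
  rw [e1, e2, ← (mul_prime_injective (p := p)).tsum_eq]
  · simp only [frob_mul, smul_mulVec, smul_add]
    rw [tsum_const_smul'', smul_smul, add_right_comm, ← add_smul]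
    push_cast
    congr 2
    refine tsum_congr fun k => ?_
    rw [show (p : ℤ) * i + a - p * k = p * (i - k) + a by ring]
  · intro j hj
    by_contra hr
    exact hj (by simp only [frob_of_notMem_range B hr, zero_mulVec])

/-- Coefficientwise form of the relation `(t d/dt + B) F = F (t d/dt + C)` of matrix Laurent
series. -/
structure Horizontal (B C F : ℤ → Matrix (Fin r) (Fin r) ℚ_[p]) : Prop where
  summable_left : ∀ n : ℤ, Summable fun j : ℤ => B j * F (n - j)
  summable_right : ∀ n : ℤ, Summable fun j : ℤ => F j * C (n - j)
  eq : ∀ n : ℤ, (n : ℚ_[p]) • F n + ∑' j : ℤ, B j * F (n - j) = ∑' j : ℤ, F j * C (n - j)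

open Matrix in
/-- The operator form of the relation `(t d/dt + B) F = F (t d/dt + C)`. -/
lemma Horizontal.nabla_mul {B C F : ℤ → Matrix (Fin r) (Fin r) ℚ_[p]} (h : Horizontal B C F)
    (hB : Conv ρ.1 B) (hC : Conv ρ.1 C) (hF : Conv ρ.1 F) :
    nabla B hB * mulOp F hF = mulOp F hF * nabla C hC := by
  refine LinearMap.ext fun x => Subtype.ext (funext fun m => ?_)
  have e1 : ((nabla B hB * mulOp F hF) x).1 m = (m : ℚ_[p]) • (mulOp F hF x).1 m +
      (mulOp B hB (mulOp F hF x)).1 m := rfl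
  have e2 : ((mulOp F hF * nabla C hC) x).1 m = (mulOp F hF (euler p r ρ x)).1 m +
      (mulOp F hF (mulOp C hC x)).1 m := by
    have : (mulOp F hF * nabla C hC) x = mulOp F hF (euler p r ρ x) + mulOp F hF (mulOp C hC x) :=
      (mulOp F hF).map_add (euler p r ρ x) (mulOp C hC x)
    rw [this]; rfl
  have s1 : HasSum (fun n : ℤ => (m : ℚ_[p]) • (F n *ᵥ x.1 (m - n)))
      ((m : ℚ_[p]) • (mulOp F hF x).1 m) :=
    (summable_term hF x.2 m).hasSum.const_smul _
  have s2 : HasSum (fun n : ℤ => F n *ᵥ (((m - n : ℤ) : ℚ_[p]) • x.1 (m - n)))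
      ((mulOp F hF (euler p r ρ x)).1 m) :=
    (summable_term hF (euler p r ρ x).2 m).hasSum
  have s3 := s1.add (hasSum_mulOp_mul hB hF h.summable_left x m)
  have s4 := s2.add (hasSum_mulOp_mul hF hC h.summable_right x m)
  rw [e1, e2]
  refine s3.unique (s4.congr_fun fun n => ?_)
  rw [← h.eq n, add_mulVec, mulVec_smul, smul_mulVec, ← add_assoc, ← add_smul]
  congr 2
  push_cast; ring

open Matrix in
lemma mulOp_mul_eq_one {F G : ℤ → Matrix (Fin r) (Fin r) ℚ_[p]} (hF : Conv ρ.1 F)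
    (hG : Conv ρ.1 G) (hs : ∀ m : ℤ, Summable fun j : ℤ => F j * G (m - j))
    (h : ∀ m : ℤ, ∑' j : ℤ, F j * G (m - j) = if m = 0 then 1 else 0) :
    mulOp F hF * mulOp G hG = 1 := by
  refine LinearMap.ext fun x => Subtype.ext (funext fun m => ?_)
  refine (hasSum_mulOp_mul hF hG hs x m).unique ?_
  have := hasSum_single (f := fun n : ℤ => (∑' j : ℤ, F j * G (n - j)) *ᵥ x.1 (m - n)) 0
    (fun n hn => by rw [h n, if_neg hn, zero_mulVec])
  rw [h 0, if_pos rfl, one_mulVec, sub_zero] at this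
  exact this

end frobenius

/-! ### Connections with a Frobenius structure -/

section assembly

variable {p : ℕ} [Fact p.Prime] {r : ℕ}

open Filter

lemma conv_of_tendsto {P : ℤ → Matrix (Fin r) (Fin r) ℚ_[p]} {ρ : ℝ}
    (h1 : Tendsto (fun i : ℤ => padicMatNorm p (P i) * ρ ^ i) atTop (nhds 0))
    (h2 : Tendsto (fun i : ℤ => padicMatNorm p (P i) * ρ ^ i) atBot (nhds 0)) : Conv ρ P := by
  rw [Conv, Int.cofinite_eq]
  exact h2.sup h1

/-- The connection matrix `B = t N` converges on the open unit disk. -/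
lemma conv_shift {N : ℤ → Matrix (Fin r) (Fin r) ℚ_[p]} (hNlow : ∀ i : ℤ, i < -1 → N i = 0)
    {ρ : ℝ} (hρ : 0 < ρ)
    (h : Tendsto (fun i : ℤ => padicMatNorm p (N i) * ρ ^ i) atTop (nhds 0)) :
    Conv ρ (fun i => N (i - 1)) := by
  refine conv_of_tendsto ?_ ?_
  · have h1 := (h.comp (tendsto_atTop_add_const_right atTop (-1 : ℤ) tendsto_id)).mul_const ρ
    rw [zero_mul] at h1
    refine h1.congr fun i => ?_
    change padicMatNorm p (N (i + -1)) * ρ ^ (i + -1) * ρ = _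
    rw [mul_assoc, ← zpow_add_one₀ hρ.ne', ← sub_eq_add_neg, sub_add_cancel]
  · refine tendsto_const_nhds.congr' ?_
    filter_upwards [eventually_lt_atBot (0 : ℤ)] with i hi
    rw [hNlow _ (by omega), padicMatNorm_zero, zero_mul]

/-- With `B = t N`, the hypothesis on `F` says that `F` intertwines the connection
`t d/dt + B` and its Frobenius pullback. -/
lemma horizontal_of_eq {N F : ℤ → Matrix (Fin r) (Fin r) ℚ_[p]}
    (hSum₁ : ∀ m : ℤ, Summable fun j : ℤ => N j * F (m - j))
    (hSum₂ : ∀ m : ℤ, Summable fun k : ℤ => F (m - (p : ℤ) + 1 - (p : ℤ) * k) * N k)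
    (heq : ∀ m : ℤ, (m + 1) • F (m + 1) + ∑' j : ℤ, N j * F (m - j) =
      (p : ℤ) • ∑' k : ℤ, F (m - (p : ℤ) + 1 - (p : ℤ) * k) * N k) :
    Horizontal (fun i => N (i - 1)) (frob fun i => N (i - 1)) F := by
  have hp : (p : ℤ) ≠ 0 := by exact_mod_cast (Fact.out : p.Prime).ne_zero
  have h1 : ∀ n : ℤ, (fun j : ℤ => N (j - 1) * F (n - j)) =
      (fun j : ℤ => N j * F (n - 1 - j)) ∘ (Equiv.subRight (1 : ℤ)) := by
    intro n; funext j
    simp only [Function.comp, Equiv.subRight_apply]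
    rw [show n - 1 - (j - 1) = n - j by ring]
  -- the index `j = n - p (k + 1)` of `F` is paired with the index `k` of `N`
  have hinj : ∀ n : ℤ, Function.Injective fun k : ℤ => n - p * (k + 1) := by
    intro n a b hab
    have h : (p : ℤ) * (a + 1) = p * (b + 1) := by simpa using hab
    have := mul_left_cancel₀ hp h
    omega
  have hrange : ∀ n : ℤ, ∀ j ∉ Set.range (fun k : ℤ => n - p * (k + 1)),
      F j * frob (fun i => N (i - 1)) (n - j) = 0 := by
    intro n j hj
    rw [frob_of_notMem_range, mul_zero]
    rintro ⟨k, hk⟩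
    refine hj ⟨k - 1, ?_⟩
    simp only at hk ⊢
    rw [sub_add_cancel, hk]; ring
  have h2 : ∀ n : ℤ, ((fun j : ℤ => F j * frob (fun i => N (i - 1)) (n - j)) ∘
      fun k : ℤ => n - p * (k + 1)) =
      fun k : ℤ => (p : ℚ_[p]) • (F (n - 1 - (p : ℤ) + 1 - (p : ℤ) * k) * N k) := by
    intro n; funext k
    simp only [Function.comp]
    rw [sub_sub_cancel, frob_mul, add_sub_cancel_right, mul_smul_comm]
    congr 3; ring
  refine ⟨fun n => ?_, fun n => ?_, fun n => ?_⟩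
  · rw [h1]
    exact (Equiv.summable_iff _).2 (hSum₁ (n - 1))
  · rw [← (hinj n).summable_iff (hrange n), h2]
    exact (hSum₂ (n - 1)).const_smul _
  · have e1 : ∑' j : ℤ, N (j - 1) * F (n - j) = ∑' j : ℤ, N j * F (n - 1 - j) := by
      rw [h1]
      exact (Equiv.subRight (1 : ℤ)).tsum_eq (fun j : ℤ => N j * F (n - 1 - j))
    have e2 : ∑' j : ℤ, F j * frob (fun i => N (i - 1)) (n - j) =
        (p : ℚ_[p]) • ∑' k : ℤ, F (n - 1 - (p : ℤ) + 1 - (p : ℤ) * k) * N k := by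
      rw [← tsum_const_smul'', ← h2]
      refine ((hinj n).tsum_eq fun j hj => ?_).symm
      by_contra hr
      exact hj (hrange n j hr)
    have e3 := heq (n - 1)
    rw [sub_add_cancel] at e3
    rw [e1, e2, Int.cast_smul_eq_zsmul ℚ_[p], e3]
    have := Int.cast_smul_eq_zsmul ℚ_[p] (p : ℤ)
      (∑' k : ℤ, F (n - 1 - (p : ℤ) + 1 - (p : ℤ) * k) * N k)
    rw [← this, Int.cast_natCast]

/-- A connection with a Frobenius structure has growth rates arbitrarily close to `1`, on suitable
circles of radius in `[σ₀, 1)`: passing from the circle of radius `σ` to that of radius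
`σ ^ (1 / p)` at least halves the distance of the growth rate to `1`. -/
lemma exists_growth {B F G : ℤ → Matrix (Fin r) (Fin r) ℚ_[p]} {σ₀ : ℝ} (h0 : 0 < σ₀)
    (h1 : σ₀ < 1) (hB : ∀ ρ, 0 < ρ → ρ < 1 → Conv ρ B)
    (hF : ∀ ρ, σ₀ ≤ ρ → ρ < 1 → Conv ρ F) (hG : ∀ ρ, σ₀ ≤ ρ → ρ < 1 → Conv ρ G)
    (hrel : Horizontal B (frob B) F)
    (hFGsum : ∀ m : ℤ, Summable fun j : ℤ => F j * G (m - j))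
    (hFG : ∀ m : ℤ, ∑' j : ℤ, F j * G (m - j) = if m = 0 then 1 else 0) :
    ∃ y : ℝ, 0 ≤ y ∧ ∀ k : ℕ, ∃ ρ : {ρ : ℝ // 0 < ρ}, σ₀ ≤ ρ.1 ∧ ρ.1 < 1 ∧
      ∀ hB : Conv ρ.1 B, Growth (r := r) (nabla B hB) (1 + y / 2 ^ k) := by
  have hp : p.Prime := Fact.out
  have hp2 : (2 : ℝ) ≤ p := by exact_mod_cast hp.two_le
  obtain ⟨b, hb1, hb⟩ := (hB σ₀ h0 h1).bound
  refine ⟨p * b - 1, by nlinarith, fun k => ?_⟩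
  have hy : 0 ≤ (p : ℝ) * b - 1 := by nlinarith
  induction k with
  | zero =>
    refine ⟨⟨σ₀, h0⟩, le_rfl, h1, fun hB' => ?_⟩
    rw [pow_zero, div_one, add_sub_cancel]
    exact growth_of_opLE hb1 ((opLE_euler.mono hb1).add (opLE_mulOp _ hb))
  | succ k ih =>
    obtain ⟨σ, hσ0, hσ1, hσ⟩ := ih
    obtain ⟨ρ, hρσ⟩ : ∃ ρ : {ρ : ℝ // 0 < ρ}, σ.1 = ρ.1 ^ p :=
      ⟨⟨σ.1 ^ ((p : ℝ)⁻¹), Real.rpow_pos_of_pos σ.2 _⟩,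
        (Real.rpow_inv_natCast_pow σ.2.le hp.ne_zero).symm⟩
    have hρ1 : ρ.1 < 1 := by
      by_contra h
      have := one_le_pow₀ (not_lt.1 h) (n := p)
      linarith
    have hσρ : σ₀ ≤ ρ.1 := by
      refine hσ0.trans ?_
      rw [hρσ]
      exact pow_le_of_le_one ρ.2.le hρ1.le hp.ne_zero
    refine ⟨ρ, hσρ, hρ1, fun hB' => ?_⟩
    have hBσ := hB σ.1 σ.2 hσ1
    have hfB : Conv ρ.1 (frob B) := Conv.frob ρ.2 (hρσ ▸ hBσ)
    have cF := hF ρ.1 hσρ hρ1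
    have cG := hG ρ.1 hσρ hρ1
    obtain ⟨bF, hbF, hbF'⟩ := cF.bound
    obtain ⟨bG, hbG, hbG'⟩ := cG.bound
    set y := ((p : ℝ) * b - 1) / 2 ^ (k + 1) with hydef
    have hy0 : 0 ≤ y := by positivity
    have hyk : ((p : ℝ) * b - 1) / 2 ^ k = 2 * y := by rw [hydef, pow_succ]; field_simp
    rw [hyk] at hσ
    have hgr : Growth (nabla (frob B) hfB) (1 + y) := by
      refine Growth.frobenius hρσ (section_nabla_frob hρσ hBσ hfB) (η := 1 + 2 * y) (by linarith)
        (by linarith) ?_ ?_ (hσ hBσ)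
      · have := one_add_mul_le_pow (by linarith : (-2 : ℝ) ≤ y) p
        nlinarith
      · nlinarith
    exact Growth.conj (by linarith) (by linarith) (opLE_mulOp cF hbF') (opLE_mulOp cG hbG')
      (mulOp_mul_eq_one cF cG hFGsum hFG) (hrel.nabla_mul hB' hfB cF).symm hgr

end assembly

/-- Under the hypotheses of Kedlaya's lemma, if moreover `G(t)` is a matrix Laurent series
converging on an open annulus of outer radius `1` with `F·G = G·F = I` as Laurent
expansions, then the constant coefficient `F₀` is invertible with inverse `G₀`. -/
theorem constant_coefficient_invertible_of_frobenius_equation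
    (p : ℕ) [hp : Fact p.Prime] (r : ℕ) (hr : 0 < r)
    (N F G : ℤ → Matrix (Fin r) (Fin r) ℚ_[p])
    (hNlow : ∀ i : ℤ, i < -1 → N i = 0)
    (hNnil : IsNilpotent (N (-1)))
    (hNconv : ∀ ρ : ℝ, 0 < ρ → ρ < 1 →
      Filter.Tendsto (fun i : ℤ => padicMatNorm p (N i) * ρ ^ i) Filter.atTop (nhds 0))
    (hFconv : ∃ r₀ : ℝ, 0 < r₀ ∧ r₀ < 1 ∧ ∀ ρ : ℝ, r₀ < ρ → ρ < 1 →
      Filter.Tendsto (fun i : ℤ => padicMatNorm p (F i) * ρ ^ i) Filter.atTop (nhds 0) ∧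
      Filter.Tendsto (fun i : ℤ => padicMatNorm p (F i) * ρ ^ i) Filter.atBot (nhds 0))
    (hSum₁ : ∀ m : ℤ, Summable fun j : ℤ => N j * F (m - j))
    (hSum₂ : ∀ m : ℤ, Summable fun k : ℤ => F (m - (p : ℤ) + 1 - (p : ℤ) * k) * N k)
    (heq : ∀ m : ℤ, (m + 1) • F (m + 1) + ∑' j : ℤ, N j * F (m - j) =
      (p : ℤ) • ∑' k : ℤ, F (m - (p : ℤ) + 1 - (p : ℤ) * k) * N k)
    (hGconv : ∃ r₀ : ℝ, 0 < r₀ ∧ r₀ < 1 ∧ ∀ ρ : ℝ, r₀ < ρ → ρ < 1 →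
      Filter.Tendsto (fun i : ℤ => padicMatNorm p (G i) * ρ ^ i) Filter.atTop (nhds 0) ∧
      Filter.Tendsto (fun i : ℤ => padicMatNorm p (G i) * ρ ^ i) Filter.atBot (nhds 0))
    (hFGsum : ∀ m : ℤ, Summable fun j : ℤ => F j * G (m - j))
    (hGFsum : ∀ m : ℤ, Summable fun j : ℤ => G j * F (m - j))
    (hFG : ∀ m : ℤ, ∑' j : ℤ, F j * G (m - j) = if m = 0 then 1 else 0)
    (hGF : ∀ m : ℤ, ∑' j : ℤ, G j * F (m - j) = if m = 0 then 1 else 0) :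
    F 0 * G 0 = 1 ∧ G 0 * F 0 = 1 := by
  obtain ⟨rF, hrF0, hrF1, hF⟩ := hFconv
  obtain ⟨rG, hrG0, hrG1, hG⟩ := hGconv
  obtain ⟨r₁, hr₁, hr₁1⟩ := exists_between (max_lt hrF1 hrG1)
  obtain ⟨hFr₁, hGr₁⟩ := max_lt_iff.1 hr₁
  obtain ⟨σ₀, hσ₀, hσ₀1⟩ := exists_between hr₁1
  have hr₁0 : 0 < r₁ := hrF0.trans hFr₁
  have hFC : ∀ ρ, r₁ ≤ ρ → ρ < 1 → Conv ρ F := fun ρ h h' =>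
    conv_of_tendsto (hF ρ (by linarith) h').1 (hF ρ (by linarith) h').2
  have hGC : ∀ ρ, r₁ ≤ ρ → ρ < 1 → Conv ρ G := fun ρ h h' =>
    conv_of_tendsto (hG ρ (by linarith) h').1 (hG ρ (by linarith) h').2
  have hB : ∀ ρ, 0 < ρ → ρ < 1 → Conv ρ (fun i => N (i - 1)) := fun ρ h h' =>
    conv_shift hNlow h (hNconv ρ h h')
  have hrel := horizontal_of_eq hSum₁ hSum₂ heq
  obtain ⟨y, hy, hgrow⟩ := exists_growth (hr₁0.trans hσ₀) hσ₀1 hB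
    (fun ρ h => hFC ρ (hσ₀.le.trans h)) (fun ρ h => hGC ρ (hσ₀.le.trans h)) hrel hFGsum hFG
  obtain ⟨e, he⟩ := hNnil
  -- a growth rate close enough to `1` for the annulus `r₁ ≤ |t| < 1` to be large
  obtain ⟨k, hk⟩ : ∃ k : ℕ, (1 + y / 2 ^ k) ^ (2 * e) * r₁ < σ₀ := by
    have h1 : Filter.Tendsto (fun k : ℕ => (1 + y / 2 ^ k) ^ (2 * e) * r₁) Filter.atTop
        (nhds ((1 + 0) ^ (2 * e) * r₁)) := by
      refine (((tendsto_const_nhds.div_atTop ?_).const_add 1).pow _).mul_const _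
      exact tendsto_pow_atTop_atTop_of_one_lt one_lt_two
    rw [add_zero, one_pow, one_mul] at h1
    exact (h1.eventually (gt_mem_nhds hσ₀)).exists
  obtain ⟨ρ, hσρ, hρ1, hgr⟩ := hgrow k
  have hr₁ρ : r₁ ≤ ρ.1 := hσ₀.le.trans hσρ
  have hη : 1 ≤ 1 + y / 2 ^ k := by
    have : 0 ≤ y / 2 ^ k := by positivity
    linarith
  have cB := hB ρ.1 ρ.2 hρ1
  have cB' : Conv ρ.1 (frob fun i => N (i - 1)) :=
    Conv.frob ρ.2 (hB _ (pow_pos ρ.2 p) (pow_lt_one₀ ρ.2.le hρ1 hp.out.ne_zero))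
  have cF := hFC ρ.1 hr₁ρ hρ1
  have cG := hGC ρ.1 hr₁ρ hρ1
  have gB := hgr cB
  have FG : mulOp F cF * mulOp G cG = 1 := mulOp_mul_eq_one cF cG hFGsum hFG
  have GF : mulOp G cG * mulOp F cF = 1 := mulOp_mul_eq_one cG cF hGFsum hGF
  have relF := hrel.nabla_mul cB cB' cF
  have relG : nabla _ cB' * mulOp G cG = mulOp G cG * nabla _ cB := by
    calc nabla _ cB' * mulOp G cG
        = (mulOp G cG * mulOp F cF) * nabla _ cB' * mulOp G cG := by rw [GF, one_mul]
      _ = mulOp G cG * (mulOp F cF * nabla _ cB') * mulOp G cG := by simp only [mul_assoc]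
      _ = mulOp G cG * nabla _ cB * (mulOp F cF * mulOp G cG) := by
          rw [← relF]; simp only [mul_assoc]
      _ = mulOp G cG * nabla _ cB := by rw [FG, mul_one]
  obtain ⟨bF, hbF, hbF'⟩ := cF.bound
  obtain ⟨bG, hbG, hbG'⟩ := cG.bound
  have gB' : Growth (nabla _ cB') (1 + y / 2 ^ k) :=
    Growth.conj (by linarith) (by linarith) (opLE_mulOp cG hbG') (opLE_mulOp cF hbF') GF
      relG.symm gB
  have nB : NilRes e (nabla _ cB) :=
    nilRes_nabla cB (fun j hj => hNlow _ (by omega)) (by simpa using he)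
  have nB' : NilRes e (nabla _ cB') := by
    refine nilRes_nabla cB' (fun j hj => ?_) ?_
    · by_cases h : j ∈ Set.range fun k : ℤ => (p : ℤ) * k
      · obtain ⟨i, rfl⟩ := h
        have hp0 : (0 : ℤ) < p := by exact_mod_cast hp.out.pos
        have hi : i < 0 := by
          by_contra h
          have := mul_nonneg hp0.le (not_lt.1 h)
          exact absurd hj (not_lt.2 this)
        rw [frob_mul, hNlow _ (by omega), smul_zero]
      · exact frob_of_notMem_range _ h
    · have := frob_mul (p := p) (fun i => N (i - 1)) 0
      rw [mul_zero] at this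
      rw [this, smul_pow, zero_sub, he, smul_zero]
  obtain ⟨c, -, hc⟩ := (hFC r₁ le_rfl hr₁1).bound
  obtain ⟨d, -, hd⟩ := (hGC r₁ le_rfl hr₁1).bound
  have F0 : ∀ i < 0, F i = 0 := no_negative cF hη gB gB' nB nB' relF hr₁0 hc (hk.trans_le hσρ)
  have G0 : ∀ i < 0, G i = 0 := no_negative cG hη gB' gB nB' nB relG hr₁0 hd (hk.trans_le hσρ)
  have fin : ∀ P Q : ℤ → Matrix (Fin r) (Fin r) ℚ_[p], (∀ i < 0, P i = 0) → (∀ i < 0, Q i = 0) →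
      ∑' j : ℤ, P j * Q (0 - j) = P 0 * Q 0 := by
    intro P Q hP hQ
    refine (tsum_eq_single 0 fun j hj => ?_).trans (by rw [sub_zero])
    rcases lt_or_gt_of_ne hj with hj | hj
    · rw [hP j hj, zero_mul]
    · rw [hQ (0 - j) (by omega), mul_zero]
  exact ⟨by rw [← fin F G F0 G0, hFG, if_pos rfl], by rw [← fin G F G0 F0, hGF, if_pos rfl]⟩
end

section
/- Let p be a prime and let Δ be a polynomial with coefficients in the ring ℤ_p of p-adic integers such that Δ(0) ≠ 0, the p-adic norm of Δ(0) is strictly less than 1 (equivalently p divides Δ(0) in ℤ_p), and not every coefficient of Δ is divisible by p. Then Δ has a root α in an algebraic closure of ℚ_p satisfying 0 < ‖α‖ < 1, where ‖·‖ denotes the unique extension of the p-adic norm to the algebraic closure (the spectral norm); that is, Δ has a root in the punctured p-adic open unit disk around the origin. -/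
/-!
Call a polynomial over an ultrametric normed field *dominated by its constant term* when no
coefficient has larger norm than the coefficient at `0`. The ultrametric inequality makes this
property multiplicative, and it holds for constants and for `X - a` with `1 ≤ ‖a‖`. Hence a
polynomial all of whose roots have norm at least `1` is dominated by its constant term. For `Δ` this
fails, since `‖Δ(0)‖ < 1` while some coefficient is a unit. So `Δ` has a root of norm less than `1`,
and it is nonzero because `Δ(0) ≠ 0`.
-/

/-- The spectral norm of an element `α` of an algebraic closure of `ℚ_p`: the unique
extension of the p-adic norm, given by `‖α‖ = ‖c₀‖^(1/n)` where `c₀` is the constant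
coefficient and `n` the degree of the minimal polynomial of `α` over `ℚ_p` (all conjugates
of `α` share the same norm, and their product is `±c₀`). -/
noncomputable def padicSpectralNorm (p : ℕ) [Fact p.Prime]
    (α : AlgebraicClosure ℚ_[p]) : ℝ :=
  ‖(minpoly ℚ_[p] α).coeff 0‖ ^ (((minpoly ℚ_[p] α).natDegree : ℝ))⁻¹

open Polynomial in
theorem coeff_mul_norm_le_of_dominated {K : Type*} [NormedField K] [IsUltrametricDist K]
    {f g : K[X]} (hf : ∀ n, ‖f.coeff n‖ ≤ ‖f.coeff 0‖) (hg : ∀ n, ‖g.coeff n‖ ≤ ‖g.coeff 0‖)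
    (n : ℕ) : ‖(f * g).coeff n‖ ≤ ‖(f * g).coeff 0‖ := by
  rw [coeff_mul, mul_coeff_zero, norm_mul]
  refine IsUltrametricDist.norm_sum_le_of_forall_le_of_nonneg (by positivity) fun x _ => ?_
  rw [norm_mul]
  exact mul_le_mul (hf _) (hg _) (norm_nonneg _) (norm_nonneg _)

open Polynomial in
/-- If every root of a split polynomial has norm at least `1`, then its constant term has the
largest norm among its coefficients. -/
theorem coeff_norm_le_of_one_le_norm_roots {K : Type*} [NormedField K] [IsUltrametricDist K]
    {f : K[X]} (hf : f.Splits) (hr : ∀ a ∈ f.roots, 1 ≤ ‖a‖) (n : ℕ) :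
    ‖f.coeff n‖ ≤ ‖f.coeff 0‖ := by
  have hprod : ∀ s : Multiset K, (∀ a ∈ s, 1 ≤ ‖a‖) → ∀ n,
      ‖((s.map fun a => X - C a).prod).coeff n‖ ≤ ‖((s.map fun a => X - C a).prod).coeff 0‖ := by
    intro s
    induction s using Multiset.induction_on with
    | empty =>
      intro _ n
      rcases n with _ | n <;> simp [coeff_one]
    | cons a s ih =>
      intro hs
      rw [Multiset.map_cons, Multiset.prod_cons]
      refine coeff_mul_norm_le_of_dominated (fun n => ?_)
        (ih fun b hb => hs b (Multiset.mem_cons_of_mem hb))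
      have ha := hs a (Multiset.mem_cons_self a s)
      rcases n with _ | _ | n
      · exact le_rfl
      · simpa [coeff_X, coeff_C] using ha
      · simp [coeff_X, coeff_C]
  rw [hf.eq_prod_roots]
  simp only [coeff_C_mul, norm_mul]
  exact mul_le_mul_of_nonneg_left (hprod _ hr n) (norm_nonneg _)

/-- Newton-polygon observation: if `Δ ∈ ℤ_p[t]` satisfies `Δ(0) ≠ 0`, `‖Δ(0)‖ < 1`
(i.e. `p ∣ Δ(0)`), and not all coefficients of `Δ` are divisible by `p`, then `Δ` has a
root `α` in an algebraic closure of `ℚ_p` with `0 < ‖α‖ < 1`, i.e. a root in the punctured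
p-adic open unit disk. -/
theorem root_in_punctured_open_unit_disk
    (p : ℕ) [hp : Fact p.Prime] (Δ : Polynomial ℤ_[p])
    (h0 : Δ.eval 0 ≠ 0) (hnorm : ‖Δ.eval 0‖ < 1)
    (hcoeff : ¬ ∀ n : ℕ, (p : ℤ_[p]) ∣ Δ.coeff n) :
    ∃ α : AlgebraicClosure ℚ_[p],
      Polynomial.aeval α (Δ.map (algebraMap ℤ_[p] ℚ_[p])) = 0 ∧
      0 < padicSpectralNorm p α ∧ padicSpectralNorm p α < 1 := by
  have hspec : ∀ α : PadicAlgCl p, padicSpectralNorm p α = ‖α‖ := fun α => by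
    rw [← PadicAlgCl.spectralNorm_eq, spectralNorm.spectralNorm_eq_norm_coeff_zero_rpow]
    simp [padicSpectralNorm, one_div]
  set g : Polynomial (PadicAlgCl p) :=
    (Δ.map (algebraMap ℤ_[p] ℚ_[p])).map (algebraMap ℚ_[p] (PadicAlgCl p)) with hg
  have hgc : ∀ n, ‖g.coeff n‖ = ‖Δ.coeff n‖ := fun n => by
    rw [hg, Polynomial.coeff_map, Polynomial.coeff_map]
    exact PadicAlgCl.norm_extends p _
  rw [← Polynomial.coeff_zero_eq_eval_zero] at h0 hnorm
  obtain ⟨α, hα, hlt⟩ : ∃ α ∈ g.roots, ‖α‖ < 1 := by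
    by_contra! hr
    refine hcoeff fun n => ?_
    rw [← PadicInt.norm_lt_one_iff_dvd, ← hgc]
    refine (coeff_norm_le_of_one_le_norm_roots (IsAlgClosed.splits g) hr n).trans_lt ?_
    rwa [hgc]
  have hroot : g.eval α = 0 := (Polynomial.mem_roots'.1 hα).2
  refine ⟨α, ?_, ?_, ?_⟩
  · rwa [Polynomial.aeval_def, ← Polynomial.eval_map]
  · rw [hspec, norm_pos_iff]
    rintro rfl
    rw [← Polynomial.coeff_zero_eq_eval_zero, ← norm_eq_zero, hgc, norm_eq_zero] at hroot
    exact h0 hroot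
  · rwa [hspec]
end
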